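/- arXiv:2108.13532 — 4 statements merged into one kernel-verified Lean document; each statement's English description precedes it below -/
import Mathlib

section
/- For every real number T, the integral over t ∈ ℝ of t·sinh(πt)·∏_{ε₁,ε₂∈{+1,−1}} B(1/4 + ε₁·i·t/2 + ε₂·i·T, 1/4 − ε₁·i·t/2) dt equals 8π³. -/
open MeasureTheory Complex

/-- The Beta function of complex arguments, `B(x,y) = Γ(x)Γ(y)/Γ(x+y)`. -/
noncomputable def complexBeta (x y : ℂ) : ℂ :=
  Complex.Gamma x * Complex.Gamma y / Complex.Gamma (x + y)

open Filter Topology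


lemma dw_normSeq (σ y : ℝ) (n : ℕ) (hn : 0 < n) :
    ‖Complex.GammaSeq (σ + y * I) n‖ =
      (n : ℝ) ^ σ * (n.factorial : ℝ) / ∏ j ∈ Finset.range (n + 1), ‖((σ + j : ℝ) : ℂ) + y * I‖ := by
  unfold Complex.GammaSeq
  rw [norm_div, norm_mul, Complex.norm_natCast_cpow_of_pos hn, norm_prod, Complex.norm_natCast]
  congr 1
  · simp
  · refine Finset.prod_congr rfl fun j _ => ?_
    congr 1
    push_cast
    ring

lemma dw_norm_ge (p y : ℝ) (_hp : 0 < p) : p ≤ ‖(p : ℂ) + y * I‖ := by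
  have := Complex.abs_re_le_norm ((p : ℂ) + y * I)
  simp at this
  exact (le_abs_self p).trans this

lemma dw_term (p q y : ℝ) (hp : 0 < p) (hpq : p ≤ q) :
    p * ‖(q : ℂ) + y * I‖ ≤ ‖(p : ℂ) + y * I‖ * q := by
  have hq : 0 < q := hp.trans_le hpq
  refine (sq_le_sq₀ (by positivity) (by positivity)).mp ?_
  rw [mul_pow, mul_pow, Complex.sq_norm, Complex.sq_norm, Complex.normSq_add_mul_I,
    Complex.normSq_add_mul_I]
  have : p ^ 2 ≤ q ^ 2 := by gcongr
  nlinarith [mul_le_mul_of_nonneg_right this (sq_nonneg y)]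

lemma dw_gmono (σ τ y : ℝ) (hσ : 0 < σ) (h : σ ≤ τ) :
    ‖Complex.Gamma (σ + y * I)‖ * Real.Gamma τ ≤ Real.Gamma σ * ‖Complex.Gamma (τ + y * I)‖ := by
  have h1 := ((Complex.GammaSeq_tendsto_Gamma (σ + y * I)).norm).mul (Real.GammaSeq_tendsto_Gamma τ)
  have h2 := (Real.GammaSeq_tendsto_Gamma σ).mul ((Complex.GammaSeq_tendsto_Gamma (τ + y * I)).norm)
  refine le_of_tendsto_of_tendsto h1 h2 ?_
  filter_upwards [eventually_gt_atTop 0] with n hn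
  rw [dw_normSeq _ _ _ hn, dw_normSeq _ _ _ hn]
  unfold Real.GammaSeq
  have hτ : 0 < τ := hσ.trans_le h
  have e1 : 0 < ∏ j ∈ Finset.range (n + 1), (σ + j) := Finset.prod_pos fun j _ => by positivity
  have e2 : 0 < ∏ j ∈ Finset.range (n + 1), (τ + j) := Finset.prod_pos fun j _ => by positivity
  have e3 : 0 < ∏ j ∈ Finset.range (n + 1), ‖((σ + j : ℝ) : ℂ) + y * I‖ :=
    Finset.prod_pos fun j _ => lt_of_lt_of_le (by positivity) (dw_norm_ge (σ + j) y (by positivity))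
  have e4 : 0 < ∏ j ∈ Finset.range (n + 1), ‖((τ + j : ℝ) : ℂ) + y * I‖ :=
    Finset.prod_pos fun j _ => lt_of_lt_of_le (by positivity) (dw_norm_ge (τ + j) y (by positivity))
  have key : (∏ j ∈ Finset.range (n + 1), (σ + j)) * ∏ j ∈ Finset.range (n + 1), ‖((τ + j : ℝ) : ℂ) + y * I‖
      ≤ (∏ j ∈ Finset.range (n + 1), ‖((σ + j : ℝ) : ℂ) + y * I‖) * ∏ j ∈ Finset.range (n + 1), (τ + j) := by
    rw [← Finset.prod_mul_distrib, ← Finset.prod_mul_distrib]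
    refine Finset.prod_le_prod (fun j _ => by positivity) fun j _ => ?_
    exact dw_term _ _ _ (by positivity) (by linarith)
  rw [div_mul_div_comm, div_mul_div_comm]
  gcongr

lemma dw_gle (σ y : ℝ) (hσ : 0 < σ) : ‖Complex.Gamma (σ + y * I)‖ ≤ Real.Gamma σ := by
  refine le_of_tendsto_of_tendsto ((Complex.GammaSeq_tendsto_Gamma (σ + y * I)).norm)
    (Real.GammaSeq_tendsto_Gamma σ) ?_
  filter_upwards [eventually_gt_atTop 0] with n hn
  rw [dw_normSeq _ _ _ hn]
  unfold Real.GammaSeq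
  have e1 : 0 < ∏ j ∈ Finset.range (n + 1), (σ + j) := Finset.prod_pos fun j _ => by positivity
  gcongr with j hj
  exact dw_norm_ge (σ + j) y (by positivity)

lemma dw_half (y : ℝ) : Complex.Gamma (1/2 + y * I) * Complex.Gamma (1/2 - y * I)
    = Real.pi / Complex.cosh (Real.pi * y) := by
  have := Complex.Gamma_mul_Gamma_one_sub (1/2 + y * I)
  rw [show (1 : ℂ) - (1/2 + y * I) = 1/2 - y * I by ring] at this
  rw [this]
  congr 1
  rw [show (Real.pi : ℂ) * (1/2 + y * I) = (Real.pi * y) * I + Real.pi / 2 by ring,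
    Complex.sin_add_pi_div_two, Complex.cos_mul_I]

lemma dw_cosh_ge (u : ℝ) : Real.exp |u| / 2 ≤ Real.cosh u := by
  rw [← Real.cosh_abs, Real.cosh_eq]
  have := Real.exp_pos (-|u|)
  linarith

lemma dw_half_norm (y : ℝ) : ‖Complex.Gamma (1/2 + y * I)‖ ^ 2 = Real.pi / Real.cosh (Real.pi * y) := by
  have h := dw_half y
  have hc : Complex.Gamma (1/2 - y * I) = (starRingEnd ℂ) (Complex.Gamma (1/2 + y * I)) := by
    rw [← Complex.Gamma_conj]
    congr 1
    apply Complex.ext <;> simp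
  rw [hc, Complex.mul_conj, Complex.normSq_eq_norm_sq] at h
  exact_mod_cast h

lemma dw_half_bound (y : ℝ) : ‖Complex.Gamma (1/2 + y * I)‖ ≤ 3 * Real.exp (-(Real.pi / 2 * |y|)) := by
  refine (sq_le_sq₀ (by positivity) (by positivity)).mp ?_
  rw [dw_half_norm, mul_pow, ← Real.exp_nat_mul]
  have h := dw_cosh_ge (Real.pi * y)
  rw [div_le_iff₀ (Real.cosh_pos _)]
  have e : Real.exp (((2:ℕ):ℝ) * -(Real.pi / 2 * |y|)) * Real.exp |Real.pi * y| = 1 := by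
    rw [← Real.exp_add, abs_mul, abs_of_pos Real.pi_pos]
    simp
    ring
  have h3 : 0 < Real.exp (((2:ℕ):ℝ) * -(Real.pi / 2 * |y|)) := Real.exp_pos _
  nlinarith [Real.pi_lt_four]

lemma dw_half_nat (N : ℕ) : ∃ C : ℝ, 0 < C ∧ ∀ y : ℝ,
    ‖Complex.Gamma (N + 1/2 + y * I)‖ ≤ C * (1 + |y|) ^ N * Real.exp (-(Real.pi / 2 * |y|)) := by
  induction N with
  | zero => exact ⟨3, by norm_num, fun y => by simpa using dw_half_bound y⟩
  | succ N ih =>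
    obtain ⟨C, hC, h⟩ := ih
    refine ⟨C * (N + 1), by positivity, fun y => ?_⟩
    have hne : (N + 1/2 + y * I : ℂ) ≠ 0 := by
      intro h0
      have := congrArg Complex.re h0
      simp at this
      have h2 : (0:ℝ) ≤ N := by positivity
      linarith
    rw [show ((N + 1 : ℕ) : ℂ) + 1/2 + y * I = (N + 1/2 + y * I) + 1 by push_cast; ring,
      Complex.Gamma_add_one _ hne, norm_mul]
    have h1 : ‖(N + 1/2 + y * I : ℂ)‖ ≤ (N + 1) * (1 + |y|) := by
      have : ‖(N + 1/2 + y * I : ℂ)‖ ≤ ‖(N : ℂ)‖ + ‖(1/2 : ℂ)‖ + ‖(y * I : ℂ)‖ := norm_add₃_le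
      simp at this
      have h2 : (0:ℝ) ≤ N := by positivity
      nlinarith [abs_nonneg y]
    calc _ ≤ ((N + 1) * (1 + |y|)) * (C * (1 + |y|) ^ N * Real.exp (-(Real.pi / 2 * |y|))) := by
          gcongr
          exact h y
      _ = _ := by ring

lemma dw_poly (N : ℕ) : ∃ C : ℝ, 0 < C ∧ ∀ y : ℝ,
    (1 + |y|) ^ N * Real.exp (-(Real.pi / 2 * |y|)) ≤ C * Real.exp (-(3/2 * |y|)) := by
  refine ⟨N.factorial * 20 ^ N * Real.exp 1, by positivity, fun y => ?_⟩
  have h := Real.pow_div_factorial_le_exp ((1 + |y|) / 20) (by positivity) N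
  rw [div_pow, div_div, div_le_iff₀ (by positivity)] at h
  calc _ ≤ (Real.exp ((1 + |y|) / 20) * (20 ^ N * N.factorial)) * Real.exp (-(Real.pi / 2 * |y|)) := by
        gcongr
    _ = N.factorial * 20 ^ N * Real.exp ((1 + |y|) / 20 + -(Real.pi / 2 * |y|)) := by
        rw [Real.exp_add]; ring
    _ ≤ N.factorial * 20 ^ N * Real.exp (1 + -(3/2 * |y|)) := by
        have : (1 + |y|) / 20 + -(Real.pi / 2 * |y|) ≤ 1 + -(3/2 * |y|) := by
          nlinarith [abs_nonneg y, Real.pi_gt_d2]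
        gcongr
    _ = _ := by rw [Real.exp_add]; ring

lemma dw_gbound (δ : ℝ) (hδ : 0 < δ) (N : ℕ) : ∃ C : ℝ, 0 < C ∧ ∀ σ y : ℝ, δ ≤ σ → σ ≤ N →
    ‖Complex.Gamma (σ + y * I)‖ ≤ C * Real.exp (-(3/2 * |y|)) := by
  obtain ⟨C1, h1, H1⟩ := dw_half_nat N
  obtain ⟨C2, h2, H2⟩ := dw_poly N
  have hcont : ContinuousOn Real.Gamma (Set.Icc δ N) := by
    refine Real.differentiableOn_Gamma_Ioi.continuousOn.mono ?_
    intro x hx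
    exact lt_of_lt_of_le hδ hx.1
  obtain ⟨M, hM⟩ := isCompact_Icc.exists_bound_of_continuousOn hcont
  have hG : 0 < Real.Gamma (N + 1/2) := Real.Gamma_pos_of_pos (by positivity)
  refine ⟨(|M| + 1) / Real.Gamma (N + 1/2) * C1 * C2, by positivity, fun σ y hσ hσ' => ?_⟩
  have h3 := dw_gmono σ (N + 1/2) y (hδ.trans_le hσ) (by linarith)
  have h4 : Real.Gamma σ ≤ |M| + 1 := by
    have := hM σ ⟨hσ, hσ'⟩
    have := (le_abs_self _).trans this
    linarith [le_abs_self M]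
  have h5 := H1 y
  have h6 := H2 y
  push_cast at h3
  rw [← le_div_iff₀ hG] at h3
  calc _ ≤ _ := h3
    _ ≤ (|M| + 1) * (C1 * (C2 * Real.exp (-(3/2 * |y|)))) / Real.Gamma (N + 1/2) := by
      gcongr
      refine h5.trans ?_
      rw [mul_assoc]
      gcongr
    _ = _ := by ring

/-- uniform bound in a strip -/
lemma dw_gstrip (a : ℂ) (ha : 0 < a.re) : ∃ C : ℝ, 0 < C ∧ ∀ z : ℂ, 0 ≤ z.re → z.re ≤ 1 →
    ‖Complex.Gamma (a + z)‖ ≤ C * Real.exp (-(3/2 * |z.im|)) := by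
  obtain ⟨C, hC, h⟩ := dw_gbound a.re ha ⌈a.re + 1⌉₊
  refine ⟨C * Real.exp (3/2 * |a.im|), by positivity, fun z hz hz' => ?_⟩
  have := h (a.re + z.re) (a.im + z.im) (by linarith) (le_trans (by linarith) (Nat.le_ceil _))
  have e : ((a.re + z.re : ℝ) : ℂ) + ((a.im + z.im : ℝ) : ℂ) * I = a + z := by
    apply Complex.ext <;> simp
  rw [e] at this
  refine this.trans ?_
  rw [mul_assoc, ← Real.exp_add]
  gcongr
  have : |z.im| ≤ |a.im + z.im| + |a.im| := by
    have := abs_sub (a.im + z.im) a.im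
    simpa using this
  linarith

lemma dw_exp_int : Integrable (fun x : ℝ => Real.exp (-|x|)) := by
  refine (integrable_inv_one_add_sq.const_mul 2).mono' (by fun_prop) (Eventually.of_forall fun x => ?_)
  rw [Real.norm_eq_abs, abs_of_pos (Real.exp_pos _), Real.exp_neg, ← div_eq_mul_inv,
    inv_le_comm₀ (Real.exp_pos _) (by positivity), inv_div]
  have := Real.quadratic_le_exp_of_nonneg (abs_nonneg x)
  rw [sq_abs] at this
  linarith [abs_nonneg x]

lemma dw_int_of_bound (f : ℝ → ℂ) (hf : Continuous f) (C : ℝ)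
    (h : ∀ x, ‖f x‖ ≤ C * Real.exp (-|x|)) : Integrable f :=
  (dw_exp_int.const_mul C).mono' hf.aestronglyMeasurable (Eventually.of_forall h)

lemma dw_sin_le (w : ℂ) : ‖Complex.sin w‖ ≤ Real.exp |w.im| := by
  rw [Complex.sin, norm_div, norm_mul, Complex.norm_I, mul_one]
  have h := norm_sub_le (Complex.exp (-w * I)) (Complex.exp (w * I))
  rw [Complex.norm_exp, Complex.norm_exp] at h
  simp at h
  have h1 : Real.exp w.im ≤ Real.exp |w.im| := Real.exp_le_exp.mpr (le_abs_self _)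
  have h2 : Real.exp (-w.im) ≤ Real.exp |w.im| := Real.exp_le_exp.mpr (neg_le_abs _)
  simp
  linarith

lemma dw_contour (F : ℂ → ℂ) (C : ℝ)
    (hd : ∀ z : ℂ, 0 ≤ z.re → z.re ≤ 1/2 → DifferentiableAt ℂ F z)
    (hb : ∀ z : ℂ, 0 ≤ z.re → z.re ≤ 1/2 → ‖F z‖ ≤ C * Real.exp (-|z.im|)) :
    ∫ y : ℝ, F (1/2 + y * I) = ∫ y : ℝ, F (y * I) := by
  have c1 : Continuous (fun y : ℝ => F (1/2 + y * I)) := by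
    rw [continuous_iff_continuousAt]
    intro y
    exact ContinuousAt.comp (f := fun y : ℝ => (1/2 + y * I : ℂ)) (hd _ (by simp) (by simp)).continuousAt (by fun_prop)
  have c0 : Continuous (fun y : ℝ => F (y * I)) := by
    rw [continuous_iff_continuousAt]
    intro y
    exact ContinuousAt.comp (f := fun y : ℝ => (y * I : ℂ)) (hd _ (by simp) (by simp)).continuousAt (by fun_prop)
  have i1 : Integrable (fun y : ℝ => F (1/2 + y * I)) :=
    dw_int_of_bound _ c1 C fun y => by simpa using hb (1/2 + y * I) (by simp) (by simp)
  have i0 : Integrable (fun y : ℝ => F (y * I)) :=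
    dw_int_of_bound _ c0 C fun y => by simpa using hb (y * I) (by simp) (by simp)
  have t1 := intervalIntegral_tendsto_integral i1 tendsto_neg_atTop_atBot tendsto_id
  have t0 := intervalIntegral_tendsto_integral i0 tendsto_neg_atTop_atBot tendsto_id
  have hz : Tendsto (fun R : ℝ => C * Real.exp (-|R|) * |1/2 - 0|) atTop (𝓝 0) := by
    have : Tendsto (fun R : ℝ => Real.exp (-|R|)) atTop (𝓝 0) :=
      Real.tendsto_exp_neg_atTop_nhds_zero.comp tendsto_abs_atTop_atTop
    simpa using (this.const_mul C).mul_const |(1/2 - 0 : ℝ)|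
  have tb : Tendsto (fun R : ℝ => ∫ x : ℝ in (0:ℝ)..(1/2), F (x + ((-R : ℝ) : ℂ) * I)) atTop (𝓝 0) := by
    refine squeeze_zero_norm (fun R => ?_) hz
    refine intervalIntegral.norm_integral_le_of_norm_le_const fun x hx => ?_
    rw [Set.uIoc_of_le (by norm_num)] at hx
    have := hb (x + ((-R : ℝ) : ℂ) * I) (by simpa using hx.1.le) (by simpa using hx.2)
    simpa using this
  have tt : Tendsto (fun R : ℝ => ∫ x : ℝ in (0:ℝ)..(1/2), F (x + (R : ℂ) * I)) atTop (𝓝 0) := by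
    refine squeeze_zero_norm (fun R => ?_) hz
    refine intervalIntegral.norm_integral_le_of_norm_le_const fun x hx => ?_
    rw [Set.uIoc_of_le (by norm_num)] at hx
    have := hb (x + (R : ℂ) * I) (by simpa using hx.1.le) (by simpa using hx.2)
    simpa using this
  have key := ((tb.sub tt).add (t1.const_mul I)).sub (t0.const_mul I)
  have hzero : ∀ R : ℝ, (∫ x : ℝ in (0:ℝ)..(1/2), F (x + ((-R : ℝ) : ℂ) * I)) -
      (∫ x : ℝ in (0:ℝ)..(1/2), F (x + (R : ℂ) * I)) +
      I * (∫ y in (-R)..R, F (1/2 + y * I)) - I * (∫ y in (-R)..R, F (y * I)) = 0 := by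
    intro R
    have := Complex.integral_boundary_rect_eq_zero_of_differentiableOn F (⟨0, -R⟩) (⟨1/2, R⟩) ?_
    · simpa using this
    · intro z hz
      rw [Complex.mem_reProdIm] at hz
      have h1 := hz.1
      simp only at h1
      rw [Set.uIcc_of_le (by norm_num)] at h1
      exact (hd z h1.1 h1.2).differentiableWithinAt
  have key2 := tendsto_nhds_unique (key.congr (fun R => by simpa using hzero R)) tendsto_const_nhds
  have h3 : I * ((∫ y : ℝ, F (1/2 + y * I)) - ∫ y : ℝ, F (y * I)) = 0 := by
    linear_combination key2
  have := (mul_eq_zero.mp h3).resolve_left I_ne_zero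
  exact sub_eq_zero.mp this

noncomputable def dwW (a : ℂ) (x : ℝ) : ℂ := Complex.Gamma (a + x * I) * Complex.Gamma (a - x * I)

noncomputable def dwI (a b c d : ℂ) : ℂ :=
  ∫ x : ℝ, (x : ℂ) * Complex.sinh (2 * Real.pi * x) * (dwW a x * dwW b x * dwW c x * dwW d x)

lemma dw_diffGamma (s : ℂ) (hs : 0 < s.re) : DifferentiableAt ℂ Complex.Gamma s := by
  refine Complex.differentiableAt_Gamma s fun m h => ?_
  rw [h] at hs
  simp at hs
  have : (0:ℝ) ≤ m := by positivity
  linarith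

lemma dw_ne (s : ℂ) (hs : 0 < s.re) : s ≠ 0 := by
  rintro rfl
  simp at hs

lemma dwW_even (a : ℂ) (x : ℝ) : dwW a (-x) = dwW a x := by
  unfold dwW
  push_cast
  rw [mul_comm]
  congr 2 <;> ring

lemma dwW_cont (a : ℂ) (ha : 0 < a.re) : Continuous (dwW a) := by
  rw [continuous_iff_continuousAt]
  intro x
  unfold dwW
  refine ContinuousAt.mul ?_ ?_
  · exact ContinuousAt.comp (f := fun x : ℝ => (a + x * I : ℂ))
      (dw_diffGamma _ (by simpa using ha)).continuousAt (by fun_prop)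
  · exact ContinuousAt.comp (f := fun x : ℝ => (a - x * I : ℂ))
      (dw_diffGamma _ (by simpa using ha)).continuousAt (by fun_prop)

lemma dwW_bound (a : ℂ) (ha : 0 < a.re) : ∃ C : ℝ, 0 < C ∧ ∀ x, ‖dwW a x‖ ≤ C * Real.exp (-(3 * |x|)) := by
  obtain ⟨C, hC, h⟩ := dw_gstrip a ha
  refine ⟨C * C, by positivity, fun x => ?_⟩
  have h1 := h (x * I) (by simp) (by simp)
  have h2 := h (-(x * I)) (by simp) (by simp)
  simp at h1 h2
  unfold dwW
  rw [norm_mul, sub_eq_add_neg]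
  calc _ ≤ (C * Real.exp (-(3/2 * |x|))) * (C * Real.exp (-(3/2 * |x|))) := by gcongr
    _ = C * C * (Real.exp (-(3/2 * |x|)) * Real.exp (-(3/2 * |x|))) := by ring
    _ = _ := by rw [← Real.exp_add]; congr 2; ring

lemma dwW_succ (a : ℂ) (ha : 0 < a.re) (x : ℝ) : dwW (a + 1) x = (a ^ 2 + x ^ 2) * dwW a x := by
  unfold dwW
  rw [show a + 1 + x * I = (a + x * I) + 1 by ring, show a + 1 - x * I = (a - x * I) + 1 by ring,
    Complex.Gamma_add_one _ (dw_ne _ (by simpa using ha)),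
    Complex.Gamma_add_one _ (dw_ne _ (by simpa using ha))]
  linear_combination (-(x:ℂ)^2 * Complex.Gamma (a + x * I) * Complex.Gamma (a - x * I)) * Complex.I_sq

lemma dw_sinh_norm (x : ℝ) : ‖Complex.sinh (2 * Real.pi * x)‖ ≤ Real.exp (2 * Real.pi * |x|) := by
  have h := dw_sin_le ((2 * Real.pi * x : ℝ) * I)
  rw [Complex.sin_mul_I, norm_mul, Complex.norm_I, mul_one] at h
  push_cast at h
  refine h.trans ?_
  simp [abs_mul, abs_of_pos Real.pi_pos]

lemma dw_kernel_bound (k : ℕ) (x : ℝ) : ‖(x : ℂ) ^ k * Complex.sinh (2 * Real.pi * x)‖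
    ≤ k.factorial * Real.exp (8 * |x|) := by
  rw [norm_mul, norm_pow, Complex.norm_real, Real.norm_eq_abs]
  have h := Real.pow_div_factorial_le_exp |x| (abs_nonneg x) k
  rw [div_le_iff₀ (by positivity)] at h
  have h2 : Real.exp (2 * Real.pi * |x|) ≤ Real.exp (7 * |x|) := by
    apply Real.exp_le_exp.mpr
    nlinarith [abs_nonneg x, Real.pi_lt_d2]
  calc _ ≤ (Real.exp |x| * k.factorial) * Real.exp (7 * |x|) := by
        gcongr
        exact (dw_sinh_norm x).trans h2
    _ = k.factorial * (Real.exp |x| * Real.exp (7 * |x|)) := by ring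
    _ = _ := by rw [← Real.exp_add]; congr 2; ring

lemma dw_prod3 (a b c : ℂ) (ha : 0 < a.re) (hb : 0 < b.re) (hc : 0 < c.re) :
    ∃ C : ℝ, 0 < C ∧ ∀ x, ‖dwW a x * dwW b x * dwW c x‖ ≤ C * Real.exp (-(9 * |x|)) := by
  obtain ⟨A, hA, h1⟩ := dwW_bound a ha
  obtain ⟨B, hB, h2⟩ := dwW_bound b hb
  obtain ⟨D, hD, h3⟩ := dwW_bound c hc
  refine ⟨A * B * D, by positivity, fun x => ?_⟩
  rw [norm_mul, norm_mul]
  calc _ ≤ (A * Real.exp (-(3 * |x|))) * (B * Real.exp (-(3 * |x|))) * (D * Real.exp (-(3 * |x|))) := by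
        gcongr
        · exact h1 x
        · exact h2 x
        · exact h3 x
    _ = A * B * D * (Real.exp (-(3 * |x|)) * Real.exp (-(3 * |x|)) * Real.exp (-(3 * |x|))) := by ring
    _ = _ := by rw [← Real.exp_add, ← Real.exp_add]; congr 2; ring

lemma dw_prod4 (a b c d : ℂ) (ha : 0 < a.re) (hb : 0 < b.re) (hc : 0 < c.re) (hd : 0 < d.re) :
    ∃ C : ℝ, 0 < C ∧ ∀ x, ‖dwW a x * dwW b x * dwW c x * dwW d x‖ ≤ C * Real.exp (-(9 * |x|)) := by
  obtain ⟨A, hA, h1⟩ := dw_prod3 a b c ha hb hc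
  obtain ⟨D, hD, h3⟩ := dwW_bound d hd
  refine ⟨A * D, by positivity, fun x => ?_⟩
  rw [norm_mul]
  have : Real.exp (-(3 * |x|)) ≤ 1 := Real.exp_le_one_iff.mpr (by nlinarith [abs_nonneg x])
  calc _ ≤ (A * Real.exp (-(9 * |x|))) * (D * 1) := by
        gcongr
        · exact h1 x
        · exact (h3 x).trans (by gcongr)
    _ = _ := by ring

lemma dw_integrand_bound (k : ℕ) (h : ℝ → ℂ) (C : ℝ)
    (hb : ∀ x, ‖h x‖ ≤ C * Real.exp (-(9 * |x|))) (x : ℝ) :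
    ‖(x : ℂ) ^ k * Complex.sinh (2 * Real.pi * x) * h x‖ ≤ (k.factorial * C) * Real.exp (-|x|) := by
  rw [norm_mul]
  calc _ ≤ (k.factorial * Real.exp (8 * |x|)) * (C * Real.exp (-(9 * |x|))) := by
        gcongr
        · exact dw_kernel_bound k x
        · exact hb x
    _ = k.factorial * C * (Real.exp (8 * |x|) * Real.exp (-(9 * |x|))) := by ring
    _ = _ := by rw [← Real.exp_add]; congr 2; ring

lemma dw_integrable (k : ℕ) (h : ℝ → ℂ) (hc : Continuous h) (C : ℝ)
    (hb : ∀ x, ‖h x‖ ≤ C * Real.exp (-(9 * |x|))) :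
    Integrable (fun x : ℝ => (x : ℂ) ^ k * Complex.sinh (2 * Real.pi * x) * h x) :=
  dw_int_of_bound _ (by fun_prop) _ (dw_integrand_bound k h C hb)

lemma dw_int4 (k : ℕ) (a b c d : ℂ) (ha : 0 < a.re) (hb : 0 < b.re) (hc : 0 < c.re) (hd : 0 < d.re) :
    Integrable (fun x : ℝ => (x : ℂ) ^ k * Complex.sinh (2 * Real.pi * x) *
      (dwW a x * dwW b x * dwW c x * dwW d x)) := by
  obtain ⟨C, _, h⟩ := dw_prod4 a b c d ha hb hc hd
  have := dwW_cont a ha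
  have := dwW_cont b hb
  have := dwW_cont c hc
  have := dwW_cont d hd
  exact dw_integrable k (fun x => dwW a x * dwW b x * dwW c x * dwW d x) (by fun_prop) C h

noncomputable def dwV (a z : ℂ) : ℂ := Complex.Gamma (a + 1/2 + z) * Complex.Gamma (a + 1/2 - z)

lemma dwV_diff (a z : ℂ) (ha : 0 < a.re) (h0 : 0 ≤ z.re) (h1 : z.re ≤ 1/2) :
    DifferentiableAt ℂ (dwV a) z := by
  unfold dwV
  refine DifferentiableAt.mul ?_ ?_
  · exact DifferentiableAt.comp (f := fun z : ℂ => a + 1/2 + z) z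
      (dw_diffGamma _ (by simp; linarith)) (by fun_prop)
  · exact DifferentiableAt.comp (f := fun z : ℂ => a + 1/2 - z) z
      (dw_diffGamma _ (by simp; linarith)) (by fun_prop)

lemma dwV_bound (a : ℂ) (ha : 0 < a.re) : ∃ C : ℝ, 0 < C ∧ ∀ z : ℂ, 0 ≤ z.re → z.re ≤ 1/2 →
    ‖dwV a z‖ ≤ C * Real.exp (-(3 * |z.im|)) := by
  obtain ⟨C, hC, h⟩ := dw_gstrip a ha
  refine ⟨C * C, by positivity, fun z h0 h1 => ?_⟩
  have h1 := h (1/2 + z) (by simp; linarith) (by simp; linarith)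
  have h2 := h (1/2 - z) (by simp; linarith) (by simp; linarith)
  rw [← add_assoc] at h1
  rw [← add_sub_assoc] at h2
  simp at h1 h2
  unfold dwV
  rw [norm_mul]
  calc _ ≤ (C * Real.exp (-(3/2 * |z.im|))) * (C * Real.exp (-(3/2 * |z.im|))) := by
        gcongr <;> simpa
    _ = C * C * (Real.exp (-(3/2 * |z.im|)) * Real.exp (-(3/2 * |z.im|))) := by ring
    _ = _ := by rw [← Real.exp_add]; congr 2; ring

lemma dwV_even (a z : ℂ) : dwV a (-z) = dwV a z := by
  unfold dwV
  rw [mul_comm]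
  congr 2; ring

lemma dwV_at (a : ℂ) (ha : 0 < a.re) (y : ℝ) : dwV a (1/2 + y * I) = (a + y * I) * dwW a y := by
  unfold dwV dwW
  rw [show a + 1/2 + (1/2 + y * I) = (a + y * I) + 1 by ring,
    show a + 1/2 - (1/2 + y * I) = a - y * I by ring,
    Complex.Gamma_add_one _ (dw_ne _ (by simpa using ha))]
  ring

lemma dw_vanish (a b c d : ℂ) (ha : 0 < a.re) (hb : 0 < b.re) (hc : 0 < c.re) (hd : 0 < d.re) :
    ∫ y : ℝ, Complex.sinh (2 * Real.pi * y) *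
      (((a + y * I) * dwW a y) * ((b + y * I) * dwW b y) * ((c + y * I) * dwW c y) *
        ((d + y * I) * dwW d y)) = 0 := by
  set F : ℂ → ℂ := fun z => Complex.sin (2 * Real.pi * z) * (dwV a z * dwV b z * dwV c z * dwV d z) with hF
  obtain ⟨A, hA, h1⟩ := dwV_bound a ha
  obtain ⟨B, hB, h2⟩ := dwV_bound b hb
  obtain ⟨D, hD, h3⟩ := dwV_bound c hc
  obtain ⟨E, hE, h4⟩ := dwV_bound d hd
  have key := dw_contour F (A * B * D * E) ?_ ?_
  · have e0 : ∫ y : ℝ, F (y * I) = 0 := by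
      have h := integral_neg_eq_self (fun y : ℝ => F (y * I)) volume
      have h' : ∀ y : ℝ, F (((-y : ℝ) : ℂ) * I) = - F (y * I) := by
        intro y
        simp only [hF]
        rw [show (((-y : ℝ) : ℂ) * I) = -(y * I) by push_cast; ring]
        simp only [dwV_even]
        rw [mul_neg, Complex.sin_neg]
        ring
      simp only [h'] at h
      rw [integral_neg] at h
      have : (2:ℂ) * ∫ y : ℝ, F (y * I) = 0 := by linear_combination -h
      simpa using this
    have e1 : ∀ y : ℝ, F (1/2 + y * I) = (-I) * (Complex.sinh (2 * Real.pi * y) *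
      (((a + y * I) * dwW a y) * ((b + y * I) * dwW b y) * ((c + y * I) * dwW c y) *
        ((d + y * I) * dwW d y))) := by
      intro y
      simp only [hF]
      rw [dwV_at a ha, dwV_at b hb, dwV_at c hc, dwV_at d hd,
        show 2 * (Real.pi : ℂ) * (1/2 + y * I) = (2 * Real.pi * y) * I + Real.pi by ring,
        Complex.sin_add_pi, Complex.sin_mul_I]
      ring
    simp only [e1] at key
    rw [integral_const_mul, e0] at key
    exact (mul_eq_zero.mp key).resolve_left (neg_ne_zero.mpr I_ne_zero)
  · intro z h0 h0'
    have := dwV_diff a z ha h0 h0'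
    have := dwV_diff b z hb h0 h0'
    have := dwV_diff c z hc h0 h0'
    have := dwV_diff d z hd h0 h0'
    have : DifferentiableAt ℂ (fun z : ℂ => Complex.sin (2 * Real.pi * z)) z := by fun_prop
    simp only [hF]
    fun_prop
  · intro z h0 h0'
    simp only [hF, norm_mul]
    have hs : ‖Complex.sin (2 * Real.pi * z)‖ ≤ Real.exp (7 * |z.im|) := by
      refine (dw_sin_le _).trans (Real.exp_le_exp.mpr ?_)
      have : (2 * (Real.pi : ℂ) * z).im = 2 * Real.pi * z.im := by simp
      rw [this, abs_mul, abs_of_pos (by positivity)]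
      nlinarith [abs_nonneg z.im, Real.pi_lt_d2]
    calc _ ≤ Real.exp (7 * |z.im|) * ((A * Real.exp (-(3 * |z.im|))) * (B * Real.exp (-(3 * |z.im|)))
          * (D * Real.exp (-(3 * |z.im|))) * (E * Real.exp (-(3 * |z.im|)))) := by
          gcongr
          · exact h1 z h0 h0'
          · exact h2 z h0 h0'
          · exact h3 z h0 h0'
          · exact h4 z h0 h0'
      _ = A * B * D * E * (Real.exp (7 * |z.im|) * Real.exp (-(3 * |z.im|)) * Real.exp (-(3 * |z.im|))
          * Real.exp (-(3 * |z.im|)) * Real.exp (-(3 * |z.im|))) := by ring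
      _ = A * B * D * E * Real.exp (-(5 * |z.im|)) := by
          simp only [← Real.exp_add]; congr 2; ring
      _ ≤ _ := by
          have : -(5 * |z.im|) ≤ -|z.im| := by linarith [abs_nonneg z.im]
          gcongr

lemma dw_rec (a b c d : ℂ) (ha : 0 < a.re) (hb : 0 < b.re) (hc : 0 < c.re) (hd : 0 < d.re) :
    (a + b + c + d) * dwI (a + 1) b c d = (a + b) * (a + c) * (a + d) * dwI a b c d := by
  set P : ℝ → ℂ := fun x => dwW a x * dwW b x * dwW c x * dwW d x with hP
  have hPe : ∀ x, P (-x) = P x := fun x => by simp only [hP, dwW_even]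
  have J0 := dw_int4 0 a b c d ha hb hc hd
  have J1 := dw_int4 1 a b c d ha hb hc hd
  have J2 := dw_int4 2 a b c d ha hb hc hd
  have J3 := dw_int4 3 a b c d ha hb hc hd
  have J4 := dw_int4 4 a b c d ha hb hc hd
  set e1 := a + b + c + d
  set e2 := a*b + a*c + a*d + b*c + b*d + c*d
  set e3 := a*b*c + a*b*d + a*c*d + b*c*d
  set e4 := a*b*c*d
  set K : ℕ → ℂ := fun k => ∫ x : ℝ, (x : ℂ) ^ k * Complex.sinh (2 * Real.pi * x) * P x with hK
  have hodd : ∀ k, Even k → K k = 0 := by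
    intro k hk
    have h := integral_neg_eq_self (fun x : ℝ => (x : ℂ) ^ k * Complex.sinh (2 * Real.pi * x) * P x) volume
    have h' : ∀ x : ℝ, (((-x : ℝ) : ℂ)) ^ k * Complex.sinh (2 * Real.pi * ((-x : ℝ) : ℂ)) * P (-x)
        = -((x : ℂ) ^ k * Complex.sinh (2 * Real.pi * x) * P x) := by
      intro x
      rw [hPe]
      push_cast
      rw [hk.neg_pow, mul_neg, Complex.sinh_neg]
      ring
    simp only [h'] at h
    rw [integral_neg] at h
    have : (2:ℂ) * K k = 0 := by simp only [hK]; linear_combination -h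
    simpa using this
  have hv := dw_vanish a b c d ha hb hc hd
  have hexp : ∀ y : ℝ, Complex.sinh (2 * Real.pi * y) *
      (((a + y * I) * dwW a y) * ((b + y * I) * dwW b y) * ((c + y * I) * dwW c y) *
        ((d + y * I) * dwW d y)) =
      e4 * ((y : ℂ) ^ 0 * Complex.sinh (2 * Real.pi * y) * P y) +
      (I * e3) * ((y : ℂ) ^ 1 * Complex.sinh (2 * Real.pi * y) * P y) +
      (-e2) * ((y : ℂ) ^ 2 * Complex.sinh (2 * Real.pi * y) * P y) +
      (-I * e1) * ((y : ℂ) ^ 3 * Complex.sinh (2 * Real.pi * y) * P y) +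
      1 * ((y : ℂ) ^ 4 * Complex.sinh (2 * Real.pi * y) * P y) := by
    intro y
    have hI3 : I ^ 3 = -I := by rw [pow_succ, I_sq]; ring
    have hI4 : I ^ 4 = 1 := I_pow_four
    have : (a + y * I) * (b + y * I) * (c + y * I) * (d + y * I) =
        e4 + I * e3 * y - e2 * y ^ 2 - I * e1 * y ^ 3 + y ^ 4 := by
      simp only [e1, e2, e3, e4]
      linear_combination (a*b + a*c + a*d + b*c + b*d + c*d) * (y:ℂ)^2 * I_sq
        + (a + b + c + d) * (y:ℂ)^3 * hI3 + (y:ℂ)^4 * hI4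
    simp only [hP]
    linear_combination (Complex.sinh (2 * Real.pi * y) * (dwW a y * dwW b y * dwW c y * dwW d y)) * this
  simp only [hexp] at hv
  rw [integral_add (by exact ((((J0.const_mul _).add (J1.const_mul _)).add (J2.const_mul _)).add (J3.const_mul _))) (J4.const_mul _),
    integral_add (by exact (((J0.const_mul _).add (J1.const_mul _)).add (J2.const_mul _))) (J3.const_mul _),
    integral_add (by exact ((J0.const_mul _).add (J1.const_mul _))) (J2.const_mul _),
    integral_add (J0.const_mul _) (J1.const_mul _)] at hv
  simp only [integral_const_mul] at hv
  have hv' : e4 * K 0 + (I * e3) * K 1 + (-e2) * K 2 + (-I * e1) * K 3 + 1 * K 4 = 0 := hv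
  rw [hodd 0 (by decide), hodd 2 (by decide), hodd 4 (by decide)] at hv'
  have hv2 : e3 * K 1 = e1 * K 3 := by
    have : I * (e3 * K 1 - e1 * K 3) = 0 := by linear_combination hv'
    exact sub_eq_zero.mp ((mul_eq_zero.mp this).resolve_left I_ne_zero)
  have hI1 : dwI a b c d = K 1 := by
    simp only [dwI, hK, hP, pow_one]
  have hI2 : dwI (a + 1) b c d = a ^ 2 * K 1 + K 3 := by
    simp only [dwI, hK]
    rw [← integral_const_mul, ← integral_add (J1.const_mul _) J3]
    congr 1
    ext x
    rw [dwW_succ a ha]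
    ring
  rw [hI1, hI2]
  simp only [e1, e3] at hv2 ⊢
  linear_combination -hv2

lemma dw_Gamma_add (s : ℂ) (hs : 0 < s.re) (n : ℕ) :
    Complex.Gamma (s + n) = Complex.Gamma s * ∏ j ∈ Finset.range n, (s + j) := by
  induction n with
  | zero => simp
  | succ n ih =>
    rw [Finset.prod_range_succ, ← mul_assoc, ← ih, Nat.cast_succ, ← add_assoc,
      Complex.Gamma_add_one _ (dw_ne _ (by simp; positivity))]
    ring

noncomputable def dwr (s : ℂ) (n : ℕ) : ℂ :=
  Complex.Gamma (s + (n + 1 : ℕ)) / ((n : ℂ) ^ s * n.factorial)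

lemma dwr_tendsto (s : ℂ) (hs : 0 < s.re) : Tendsto (dwr s) atTop (𝓝 1) := by
  have hG := Complex.Gamma_ne_zero_of_re_pos hs
  have h := (tendsto_const_nhds (x := Complex.Gamma s)).div (Complex.GammaSeq_tendsto_Gamma s) hG
  rw [div_self hG] at h
  refine h.congr fun n => ?_
  simp only [dwr, Complex.GammaSeq, Pi.div_apply]
  rw [dw_Gamma_add s hs, div_div_eq_mul_div]

lemma dwr_Gamma (s : ℂ) (n : ℕ) (hn : 0 < n) :
    Complex.Gamma (s + (n + 1 : ℕ)) = dwr s n * ((n : ℂ) ^ s * n.factorial) := by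
  unfold dwr
  rw [div_mul_cancel₀]
  have : (n : ℂ) ≠ 0 := by exact_mod_cast hn.ne'
  have h2 : (n.factorial : ℂ) ≠ 0 := by exact_mod_cast n.factorial_ne_zero
  exact mul_ne_zero (by rw [Ne, Complex.cpow_eq_zero_iff]; tauto) h2

lemma dwr_bound (σ y : ℝ) (hσ : 0 < σ) (n : ℕ) (hn : 0 < n) :
    ‖dwr (σ + y * I) n‖ ≤ ‖dwr σ n‖ := by
  unfold dwr
  rw [norm_div, norm_div, norm_mul, norm_mul, Complex.norm_natCast_cpow_of_pos hn,
    Complex.norm_natCast_cpow_of_pos hn]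
  have h1 := dw_gle (σ + (n + 1 : ℕ)) y (by positivity)
  have h2 : ‖Complex.Gamma ((σ : ℂ) + (n + 1 : ℕ))‖ = Real.Gamma (σ + (n + 1 : ℕ)) := by
    have : (σ : ℂ) + (n + 1 : ℕ) = ((σ + (n + 1 : ℕ) : ℝ) : ℂ) := by push_cast; ring
    rw [this, Complex.Gamma_ofReal, Complex.norm_real, Real.norm_of_nonneg]
    exact (Real.Gamma_pos_of_pos (by positivity)).le
  rw [h2]
  have h3 : (σ + y * I : ℂ) + (n + 1 : ℕ) = ((σ + (n + 1 : ℕ) : ℝ) : ℂ) + y * I := by push_cast; ring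
  rw [h3]
  simp only [Complex.add_re, Complex.ofReal_re, Complex.mul_re, Complex.I_re, Complex.I_im,
    Complex.ofReal_im, mul_zero, zero_mul, sub_zero, add_zero]
  gcongr

noncomputable def dwR (a b c d : ℂ) : ℂ :=
  Complex.Gamma (a + b) * Complex.Gamma (a + c) * Complex.Gamma (a + d) *
    (Complex.Gamma (b + c) * Complex.Gamma (b + d) * Complex.Gamma (c + d)) /
    Complex.Gamma (a + b + c + d)

lemma dwR_rec (a b c d : ℂ) (ha : 0 < a.re) (hb : 0 < b.re) (hc : 0 < c.re) (hd : 0 < d.re) :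
    (a + b + c + d) * dwR (a + 1) b c d = (a + b) * (a + c) * (a + d) * dwR a b c d := by
  unfold dwR
  have hs : 0 < (a + b + c + d).re := by simp; positivity
  rw [show a + 1 + b + c + d = a + b + c + d + 1 by ring, show a + 1 + b = a + b + 1 by ring,
    show a + 1 + c = a + c + 1 by ring, show a + 1 + d = a + d + 1 by ring,
    Complex.Gamma_add_one _ (dw_ne _ hs),
    Complex.Gamma_add_one (a + b) (dw_ne _ (by simp; positivity)),
    Complex.Gamma_add_one (a + c) (dw_ne _ (by simp; positivity)),
    Complex.Gamma_add_one (a + d) (dw_ne _ (by simp; positivity))]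
  have h1 := Complex.Gamma_ne_zero_of_re_pos hs
  have h2 := dw_ne _ hs
  field_simp

lemma dw_iter (a b c d : ℂ) (ha : 0 < a.re) (hb : 0 < b.re) (hc : 0 < c.re) (hd : 0 < d.re) (n : ℕ) :
    dwI (a + n) b c d * dwR a b c d = dwR (a + n) b c d * dwI a b c d := by
  induction n with
  | zero => simp; ring
  | succ n ih =>
    have han : 0 < (a + n).re := by simp; positivity
    have h1 := dw_rec (a + n) b c d han hb hc hd
    have h2 := dwR_rec (a + n) b c d han hb hc hd
    have h3 : a + n + b + c + d ≠ 0 := dw_ne _ (by simp; positivity)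
    rw [Nat.cast_succ, ← add_assoc]
    apply mul_left_cancel₀ h3
    linear_combination dwR a b c d * h1 - dwI a b c d * h2 + (a + n + b) * (a + n + c) * (a + n + d) * ih

noncomputable def dwI3 (b c d : ℂ) : ℂ :=
  ∫ x : ℝ, (x : ℂ) * Complex.sinh (2 * Real.pi * x) * (dwW b x * dwW c x * dwW d x)

noncomputable def dwD (a : ℂ) (n : ℕ) : ℂ := ((n : ℂ) ^ a * n.factorial) ^ 2

lemma dwD_ne (a : ℂ) (n : ℕ) (hn : 0 < n) : dwD a n ≠ 0 := by
  have : (n : ℂ) ≠ 0 := by exact_mod_cast hn.ne'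
  have h2 : (n.factorial : ℂ) ≠ 0 := by exact_mod_cast n.factorial_ne_zero
  exact pow_ne_zero _ (mul_ne_zero (by rw [Ne, Complex.cpow_eq_zero_iff]; tauto) h2)

lemma dwW_shift (a : ℂ) (x : ℝ) (n : ℕ) (hn : 0 < n) :
    dwW (a + (n + 1 : ℕ)) x / dwD a n = dwr (a + x * I) n * dwr (a - x * I) n := by
  rw [div_eq_iff (dwD_ne a n hn)]
  have h0 : (n : ℂ) ≠ 0 := by exact_mod_cast hn.ne'
  unfold dwW
  rw [show a + (n + 1 : ℕ) + x * I = (a + x * I) + (n + 1 : ℕ) by ring,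
    show a + (n + 1 : ℕ) - x * I = (a - x * I) + (n + 1 : ℕ) by ring,
    dwr_Gamma _ _ hn, dwr_Gamma _ _ hn]
  have : (n : ℂ) ^ (a + x * I) * (n : ℂ) ^ (a - x * I) = (n : ℂ) ^ a * (n : ℂ) ^ a := by
    rw [← Complex.cpow_add _ _ h0, ← Complex.cpow_add _ _ h0]
    congr 1; ring
  unfold dwD
  linear_combination (dwr (a + x * I) n * dwr (a - x * I) n * n.factorial ^ 2) * this

lemma dwR_lim (a b c d : ℂ) (ha : 0 < a.re) (hb : 0 < b.re) (hc : 0 < c.re) (hd : 0 < d.re) :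
    Tendsto (fun n : ℕ => dwR (a + (n + 1 : ℕ)) b c d / dwD a n) atTop
      (𝓝 (Complex.Gamma (b + c) * Complex.Gamma (b + d) * Complex.Gamma (c + d))) := by
  have h1 := dwr_tendsto (a + b) (by simp; positivity)
  have h2 := dwr_tendsto (a + c) (by simp; positivity)
  have h3 := dwr_tendsto (a + d) (by simp; positivity)
  have h4 := dwr_tendsto (a + b + c + d) (by simp; positivity)
  have h := ((((h1.mul h2).mul h3).div h4 one_ne_zero)).mul_const
    (Complex.Gamma (b + c) * Complex.Gamma (b + d) * Complex.Gamma (c + d))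
  simp only [mul_one, div_one, one_mul] at h
  refine h.congr' ?_
  filter_upwards [eventually_gt_atTop 0] with n hn
  have h0 : (n : ℂ) ≠ 0 := by exact_mod_cast hn.ne'
  have hf : (n.factorial : ℂ) ≠ 0 := by exact_mod_cast n.factorial_ne_zero
  have hp : ∀ s : ℂ, (n : ℂ) ^ s ≠ 0 := fun s => by rw [Ne, Complex.cpow_eq_zero_iff]; tauto
  have hG : dwr (a + b + c + d) n ≠ 0 := by
    unfold dwr
    refine div_ne_zero (Complex.Gamma_ne_zero_of_re_pos (by simp; positivity)) (mul_ne_zero (hp _) hf)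
  unfold dwR dwD
  rw [show a + (n + 1 : ℕ) + b + c + d = a + b + c + d + (n + 1 : ℕ) by ring,
    show a + (n + 1 : ℕ) + b = a + b + (n + 1 : ℕ) by ring,
    show a + (n + 1 : ℕ) + c = a + c + (n + 1 : ℕ) by ring,
    show a + (n + 1 : ℕ) + d = a + d + (n + 1 : ℕ) by ring,
    dwr_Gamma _ _ hn, dwr_Gamma _ _ hn, dwr_Gamma _ _ hn, dwr_Gamma _ _ hn]
  simp only [Complex.cpow_add _ _ h0]
  have := hp a
  have := hp b
  have := hp c
  have := hp d
  simp only [Pi.div_apply]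
  field_simp

lemma dwI_lim (a b c d : ℂ) (ha : 0 < a.re) (hb : 0 < b.re) (hc : 0 < c.re) (hd : 0 < d.re) :
    Tendsto (fun n : ℕ => dwI (a + (n + 1 : ℕ)) b c d / dwD a n) atTop (𝓝 (dwI3 b c d)) := by
  obtain ⟨C, hC, hb3⟩ := dw_prod3 b c d hb hc hd
  have cb := dwW_cont b hb
  have cc := dwW_cont c hc
  have cd := dwW_cont d hd
  have hσ := dwr_tendsto (a.re : ℂ) (by simpa using ha)
  have hev : ∀ᶠ n in atTop, ‖dwr (a.re : ℂ) n‖ < 2 :=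
    hσ.norm.eventually_lt_const (by simp)
  have main : Tendsto (fun n : ℕ => ∫ x : ℝ, (x : ℂ) ^ 1 * Complex.sinh (2 * Real.pi * x) *
      (dwW b x * dwW c x * dwW d x) * (dwr (a + x * I) n * dwr (a - x * I) n)) atTop
      (𝓝 (∫ x : ℝ, (x : ℂ) ^ 1 * Complex.sinh (2 * Real.pi * x) *
      (dwW b x * dwW c x * dwW d x) * (1 * 1))) := by
    refine tendsto_integral_filter_of_dominated_convergence
      (fun x => (((1:ℕ).factorial * C) * Real.exp (-|x|)) * (2 * 2)) ?_ ?_ ?_ ?_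
    · filter_upwards [eventually_gt_atTop 0] with n hn
      have : (fun x : ℝ => dwr (a + x * I) n * dwr (a - x * I) n)
          = fun x : ℝ => dwW (a + (n + 1 : ℕ)) x / dwD a n := by
        ext x; rw [dwW_shift _ _ _ hn]
      have h2 : Continuous (fun x : ℝ => dwr (a + x * I) n * dwr (a - x * I) n) := by
        rw [this]
        have := dwW_cont (a + (n + 1 : ℕ)) (by simp; positivity)
        fun_prop
      exact (Continuous.mul (by fun_prop) h2).aestronglyMeasurable
    · filter_upwards [eventually_gt_atTop 0, hev] with n hn h2
      refine Eventually.of_forall fun x => ?_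
      rw [norm_mul]
      have e1 := dwr_bound a.re (a.im + x) ha n hn
      have e2 := dwr_bound a.re (a.im - x) ha n hn
      rw [show (a.re : ℂ) + ((a.im + x : ℝ) : ℂ) * I = a + x * I by
        apply Complex.ext <;> simp] at e1
      rw [show (a.re : ℂ) + ((a.im - x : ℝ) : ℂ) * I = a - x * I by
        apply Complex.ext <;> simp] at e2
      have e3 := dw_integrand_bound 1 (fun x => dwW b x * dwW c x * dwW d x) C hb3 x
      rw [norm_mul (dwr _ _)]
      gcongr
      · exact e1.trans h2.le
      · exact e2.trans h2.le
    · exact (dw_exp_int.const_mul _).mul_const _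
    · refine Eventually.of_forall fun x => ?_
      refine Tendsto.const_mul _ ?_
      exact (dwr_tendsto _ (by simpa using ha)).mul (dwr_tendsto _ (by simpa using ha))
  simp only [mul_one, pow_one] at main
  refine main.congr' ?_
  filter_upwards [eventually_gt_atTop 0] with n hn
  unfold dwI
  rw [div_eq_mul_inv, ← integral_mul_const]
  congr 1
  ext x
  rw [← dwW_shift a x n hn]
  ring

lemma dw_main (a b c d : ℂ) (ha : 0 < a.re) (hb : 0 < b.re) (hc : 0 < c.re) (hd : 0 < d.re) :
    dwI3 b c d * dwR a b c d =
      (Complex.Gamma (b + c) * Complex.Gamma (b + d) * Complex.Gamma (c + d)) * dwI a b c d := by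
  have h1 := (dwI_lim a b c d ha hb hc hd).mul_const (dwR a b c d)
  have h2 := (dwR_lim a b c d ha hb hc hd).mul_const (dwI a b c d)
  refine tendsto_nhds_unique h1 (h2.congr fun n => ?_)
  have := dw_iter a b c d ha hb hc hd (n + 1)
  rw [div_mul_eq_mul_div, div_mul_eq_mul_div, this]

noncomputable def dwJ (a b c d : ℂ) : ℂ := dwI a b c d / dwR a b c d

lemma dwR_ne (a b c d : ℂ) (ha : 0 < a.re) (hb : 0 < b.re) (hc : 0 < c.re) (hd : 0 < d.re) :
    dwR a b c d ≠ 0 := by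
  have h1 := Complex.Gamma_ne_zero_of_re_pos (s := a + b) (by simp; positivity)
  have h2 := Complex.Gamma_ne_zero_of_re_pos (s := a + c) (by simp; positivity)
  have h3 := Complex.Gamma_ne_zero_of_re_pos (s := a + d) (by simp; positivity)
  have h4 := Complex.Gamma_ne_zero_of_re_pos (s := b + c) (by simp; positivity)
  have h5 := Complex.Gamma_ne_zero_of_re_pos (s := b + d) (by simp; positivity)
  have h6 := Complex.Gamma_ne_zero_of_re_pos (s := c + d) (by simp; positivity)
  have h7 := Complex.Gamma_ne_zero_of_re_pos (s := a + b + c + d) (by simp; positivity)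
  unfold dwR
  positivity

lemma dwJ_indep (a a' b c d : ℂ) (ha : 0 < a.re) (ha' : 0 < a'.re) (hb : 0 < b.re) (hc : 0 < c.re)
    (hd : 0 < d.re) : dwJ a b c d = dwJ a' b c d := by
  have h4 := Complex.Gamma_ne_zero_of_re_pos (s := b + c) (by simp; positivity)
  have h5 := Complex.Gamma_ne_zero_of_re_pos (s := b + d) (by simp; positivity)
  have h6 := Complex.Gamma_ne_zero_of_re_pos (s := c + d) (by simp; positivity)
  have key : ∀ a : ℂ, 0 < a.re → dwJ a b c d = dwI3 b c d /
      (Complex.Gamma (b + c) * Complex.Gamma (b + d) * Complex.Gamma (c + d)) := by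
    intro a ha
    have h7 := dwR_ne a b c d ha hb hc hd
    have := dw_main a b c d ha hb hc hd
    unfold dwJ
    rw [div_eq_div_iff h7 (by positivity), this]
    ring
  rw [key a ha, key a' ha']

lemma dwJ_swap1 (a b c d : ℂ) : dwJ a b c d = dwJ b a c d := by
  unfold dwJ dwI dwR
  congr 1
  · congr 1; ext x; ring
  · rw [add_comm b a]; ring

lemma dwJ_swap2 (a b c d : ℂ) : dwJ a b c d = dwJ c b a d := by
  unfold dwJ dwI dwR
  congr 1
  · congr 1; ext x; ring
  · rw [add_comm b a, add_comm c a, add_comm c b,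
      show b + c + a + d = a + b + c + d by ring]; ring

lemma dwJ_swap3 (a b c d : ℂ) : dwJ a b c d = dwJ d b c a := by
  unfold dwJ dwI dwR
  congr 1
  · congr 1; ext x; ring
  · rw [add_comm b a, add_comm c a, add_comm d a, add_comm d b, add_comm d c,
      show b + d + c + a = a + b + c + d by ring]; ring

lemma dwJ_const (a b c d e : ℂ) (ha : 0 < a.re) (hb : 0 < b.re) (hc : 0 < c.re)
    (hd : 0 < d.re) (he : 0 < e.re) : dwJ a b c d = dwJ e (1/2) (1/2) (1/2) := by
  have hh : 0 < (1/2 : ℂ).re := by norm_num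
  rw [dwJ_indep a (1/2) b c d ha hh hb hc hd, dwJ_swap1, dwJ_indep b (1/2) _ c d hb hh hh hc hd,
    dwJ_swap2, dwJ_indep c (1/2) _ _ d hc hh hh hh hd, dwJ_swap3,
    dwJ_indep d e _ _ _ hd he hh hh hh]

lemma dw_sech_int : Integrable (fun x : ℝ => 2 * Real.pi ^ 4 / Real.cosh (Real.pi * x) ^ 2) := by
  refine (dw_exp_int.const_mul (8 * Real.pi ^ 4)).mono' ?_ (Eventually.of_forall fun x => ?_)
  · refine Continuous.aestronglyMeasurable ?_
    exact Continuous.div (by fun_prop) (by fun_prop) fun x => by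
      have := Real.cosh_pos (Real.pi * x)
      positivity
  · have h := dw_cosh_ge (Real.pi * x)
    have hp := Real.cosh_pos (Real.pi * x)
    rw [Real.norm_eq_abs, abs_of_nonneg (by positivity), div_le_iff₀ (by positivity)]
    have h1 : Real.exp |x| ≤ Real.exp |Real.pi * x| := by
      apply Real.exp_le_exp.mpr
      rw [abs_mul, abs_of_pos Real.pi_pos]
      nlinarith [abs_nonneg x, Real.pi_gt_three]
    have h2 : Real.exp |x| ≤ 4 * Real.cosh (Real.pi * x) ^ 2 := by
      have : 1 ≤ Real.exp |x| := Real.one_le_exp (abs_nonneg x)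
      nlinarith
    have h3 : Real.exp (-|x|) * Real.exp |x| = 1 := by rw [← Real.exp_add]; simp
    have h4 : 1 ≤ Real.exp (-|x|) * (4 * Real.cosh (Real.pi * x) ^ 2) := by
      rw [← h3]; gcongr
    calc 2 * Real.pi ^ 4 = 2 * Real.pi ^ 4 * 1 := by ring
      _ ≤ 2 * Real.pi ^ 4 * (Real.exp (-|x|) * (4 * Real.cosh (Real.pi * x) ^ 2)) := by gcongr
      _ = _ := by ring

lemma dw_sech : ∫ x : ℝ, 2 * Real.pi ^ 4 / Real.cosh (Real.pi * x) ^ 2 = 4 * Real.pi ^ 3 := by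
  have hlin : Tendsto (fun x : ℝ => 2 * Real.pi * x) atTop atTop :=
    tendsto_id.const_mul_atTop (by positivity)
  have hlin' : Tendsto (fun x : ℝ => 2 * Real.pi * x) atBot atBot :=
    tendsto_id.const_mul_atBot (by positivity)
  have hbot : Tendsto (fun x : ℝ => -(4 * Real.pi ^ 3) / (Real.exp (2 * Real.pi * x) + 1)) atBot
      (𝓝 (-(4 * Real.pi ^ 3) / (0 + 1))) :=
    tendsto_const_nhds.div ((Real.tendsto_exp_atBot.comp hlin').add_const 1) (by norm_num)
  have htop : Tendsto (fun x : ℝ => -(4 * Real.pi ^ 3) / (Real.exp (2 * Real.pi * x) + 1)) atTop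
      (𝓝 0) :=
    tendsto_const_nhds.div_atTop (tendsto_atTop_add_const_right _ 1 (Real.tendsto_exp_atTop.comp hlin))
  rw [integral_of_hasDerivAt_of_tendsto (fun x => ?_) dw_sech_int hbot htop]
  · ring
  · have h1 : HasDerivAt (fun x : ℝ => Real.exp (2 * Real.pi * x) + 1)
        (Real.exp (2 * Real.pi * x) * (2 * Real.pi * 1)) x :=
      (((hasDerivAt_id x).const_mul (2 * Real.pi)).exp).add_const 1
    have hpos : Real.exp (2 * Real.pi * x) + 1 ≠ 0 := by positivity
    have h2 := (hasDerivAt_const x (-(4 * Real.pi ^ 3))).div h1 hpos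
    refine h2.congr_deriv ?_
    rw [Real.cosh_eq, show 2 * Real.pi * x = Real.pi * x + Real.pi * x by ring, Real.exp_add, Real.exp_neg]
    have := Real.exp_pos (Real.pi * x)
    field_simp
    ring

lemma dwW_half (x : ℝ) : dwW (1/2) x = Real.pi / Complex.cosh (Real.pi * x) := dw_half x

lemma dw_sinh_ne (x : ℝ) (hx : x ≠ 0) : Complex.sinh (Real.pi * x) ≠ 0 := by
  have : Real.sinh (Real.pi * x) ≠ 0 := by
    rw [Ne, Real.sinh_eq_zero]
    exact mul_ne_zero Real.pi_ne_zero hx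
  exact_mod_cast this

lemma dw_cosh_ne (x : ℝ) : Complex.cosh (Real.pi * x) ≠ 0 := by
  have : Real.cosh (Real.pi * x) ≠ 0 := (Real.cosh_pos _).ne'
  exact_mod_cast this

lemma dwW_one (x : ℝ) (hx : x ≠ 0) : dwW 1 x = Real.pi * x / Complex.sinh (Real.pi * x) := by
  unfold dwW
  have hxI : (x : ℂ) * I ≠ 0 := mul_ne_zero (by exact_mod_cast hx) I_ne_zero
  have h := Complex.Gamma_mul_Gamma_one_sub (x * I)
  rw [add_comm, Complex.Gamma_add_one _ hxI, mul_assoc, h, ← mul_assoc, Complex.sin_mul_I]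
  have := dw_sinh_ne x hx
  field_simp

lemma dw_sinh_lin (x : ℝ) : ‖Complex.sinh (2 * Real.pi * x)‖ ≤ 7 * |x| * Real.exp (7 * |x|) := by
  have h0 : ‖Complex.sinh (2 * Real.pi * x)‖ = Real.sinh (2 * Real.pi * |x|) := by
    rw [show (2 * Real.pi * x : ℂ) = ((2 * Real.pi * x : ℝ) : ℂ) by push_cast; ring,
      ← Complex.ofReal_sinh, Complex.norm_real, Real.norm_eq_abs, Real.abs_sinh, abs_mul,
      abs_of_pos (by positivity)]
  rw [h0]
  set u := 2 * Real.pi * |x| with hu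
  have hu0 : 0 ≤ u := by positivity
  have hu7 : u ≤ 7 * |x| := by
    rw [hu]; nlinarith [abs_nonneg x, Real.pi_lt_d2]
  have h1 := Real.add_one_le_exp (-(2 * u))
  have h2 : Real.sinh u = Real.exp u * (1 - Real.exp (-(2 * u))) / 2 := by
    rw [Real.sinh_eq, mul_sub, ← Real.exp_add]
    ring_nf
  rw [h2]
  calc _ ≤ Real.exp u * (2 * u) / 2 := by
        gcongr; linarith
    _ = u * Real.exp u := by ring
    _ ≤ _ := by gcongr

lemma dwI_lim0 : Tendsto (fun n : ℕ => dwI (((1 / ((n : ℝ) + 1) : ℝ)) : ℂ) (1/2) (1/2) (1/2)) atTop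
    (𝓝 (4 * Real.pi ^ 3)) := by
  have hh : 0 < (1/2 : ℂ).re := by norm_num
  have heps : Tendsto (fun n : ℕ => (1 / ((n : ℝ) + 1) : ℝ)) atTop (𝓝 0) :=
    tendsto_one_div_add_atTop_nhds_zero_nat
  obtain ⟨C, hC, hb3⟩ := dw_prod3 (1/2) (1/2) (1/2) hh hh hh
  have ch := dwW_cont (1/2) hh
  have hlim : (4 * Real.pi ^ 3 : ℂ) = ∫ x : ℝ, ((2 * Real.pi ^ 4 / Real.cosh (Real.pi * x) ^ 2 : ℝ) : ℂ) := by
    rw [integral_complex_ofReal, dw_sech]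
    push_cast
    ring
  rw [hlim]
  unfold dwI
  have hG : ∀ᶠ n : ℕ in atTop, Real.Gamma (1 / ((n : ℝ) + 1) + 1) < 2 := by
    have hc : ContinuousAt Real.Gamma 1 := by
      refine (Real.differentiableAt_Gamma fun m => ?_).continuousAt
      have : (0:ℝ) ≤ m := by positivity
      linarith
    have h := hc.tendsto.comp (x := atTop) (f := fun n : ℕ => 1 / ((n : ℝ) + 1) + 1)
      (by simpa using heps.add_const 1)
    rw [Real.Gamma_one] at h
    exact h.eventually_lt_const (by norm_num)
  refine tendsto_integral_filter_of_dominated_convergence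
      (fun x => (28 * C) * Real.exp (-|x|)) ?_ ?_ ?_ ?_
  · refine Eventually.of_forall fun n => ?_
    have := dwW_cont ((1 / ((n : ℝ) + 1) : ℝ) : ℂ) (by rw [Complex.ofReal_re]; positivity)
    exact Continuous.aestronglyMeasurable (by fun_prop)
  · filter_upwards [hG] with n hn
    refine Eventually.of_forall fun x => ?_
    set ε : ℝ := 1 / ((n : ℝ) + 1) with hε
    have hε0 : 0 < ε := by positivity
    have h1 : ‖dwW ((ε : ℂ) + 1) x‖ ≤ 4 := by
      unfold dwW
      rw [norm_mul]
      have e1 := dw_gle (ε + 1) x (by positivity)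
      have e2 := dw_gle (ε + 1) (-x) (by positivity)
      push_cast at e1 e2
      rw [neg_mul, ← sub_eq_add_neg] at e2
      calc _ ≤ (2:ℝ) * 2 := by
            gcongr
            · linarith
            · linarith
        _ = 4 := by norm_num
    have h2 : x ^ 2 * ‖dwW ε x‖ ≤ 4 := by
      rw [dwW_succ _ (by simpa using hε0), norm_mul] at h1
      have : ‖(ε : ℂ) ^ 2 + (x : ℂ) ^ 2‖ = ε ^ 2 + x ^ 2 := by
        rw [show (ε : ℂ) ^ 2 + (x : ℂ) ^ 2 = ((ε ^ 2 + x ^ 2 : ℝ) : ℂ) by push_cast; ring,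
          Complex.norm_real, Real.norm_of_nonneg (by positivity)]
      rw [this] at h1
      nlinarith [norm_nonneg (dwW ε x), mul_nonneg (sq_nonneg ε) (norm_nonneg (dwW ε x))]
    have h3 := dw_sinh_lin x
    have h4 := hb3 x
    rw [show dwW ε x * dwW (1/2) x * dwW (1/2) x * dwW (1/2) x =
      dwW ε x * (dwW (1/2) x * dwW (1/2) x * dwW (1/2) x) by ring, norm_mul, norm_mul, norm_mul (dwW ε x),
      Complex.norm_real, Real.norm_eq_abs]
    calc _ ≤ |x| * (7 * |x| * Real.exp (7 * |x|)) * (‖dwW ε x‖ * (C * Real.exp (-(9 * |x|)))) := by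
          gcongr
      _ = 7 * C * (x ^ 2 * ‖dwW ε x‖) * (Real.exp (7 * |x|) * Real.exp (-(9 * |x|))) := by
          rw [← sq_abs x]; ring
      _ ≤ 7 * C * 4 * Real.exp (-|x|) := by
          rw [← Real.exp_add]
          have : 7 * |x| + -(9 * |x|) ≤ -|x| := by linarith [abs_nonneg x]
          gcongr
      _ = _ := by ring
  · exact dw_exp_int.const_mul _
  · have hae : ∀ᵐ x : ℝ, x ≠ 0 := by
      simp [ae_iff, measure_singleton]
    filter_upwards [hae] with x hx
    have hxc : (x : ℂ) ≠ 0 := by exact_mod_cast hx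
    have hepsC : Tendsto (fun n : ℕ => ((1 / ((n : ℝ) + 1) : ℝ) : ℂ)) atTop (𝓝 0) := by
      have := (Complex.continuous_ofReal.tendsto 0).comp heps
      rw [Complex.ofReal_zero] at this
      exact this
    have hWc : ContinuousAt (fun e : ℂ => dwW e x) 1 := by
      unfold dwW
      refine ContinuousAt.mul ?_ ?_
      · exact ContinuousAt.comp (f := fun e : ℂ => (e + x * I : ℂ))
          (dw_diffGamma _ (by simp)).continuousAt (by fun_prop)
      · exact ContinuousAt.comp (f := fun e : ℂ => (e - x * I : ℂ))
          (dw_diffGamma _ (by simp)).continuousAt (by fun_prop)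
    have hW1 : Tendsto (fun n : ℕ => dwW (((1 / ((n : ℝ) + 1) : ℝ) : ℂ) + 1) x) atTop (𝓝 (dwW 1 x)) :=
      hWc.tendsto.comp (by simpa using hepsC.add_const 1)
    have hden : Tendsto (fun n : ℕ => ((1 / ((n : ℝ) + 1) : ℝ) : ℂ) ^ 2 + (x : ℂ) ^ 2) atTop
        (𝓝 (0 ^ 2 + (x : ℂ) ^ 2)) := (hepsC.pow 2).add_const _
    have hW0 := hW1.div hden (by simpa using hxc)
    have hW2 : Tendsto (fun n : ℕ => dwW ((1 / ((n : ℝ) + 1) : ℝ) : ℂ) x) atTop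
        (𝓝 (dwW 1 x / (0 ^ 2 + (x : ℂ) ^ 2))) := by
      refine hW0.congr fun n => ?_
      have hpos : (((1 / ((n : ℝ) + 1) : ℝ) : ℂ)) ^ 2 + (x : ℂ) ^ 2 ≠ 0 := by
        have : (1 / ((n : ℝ) + 1)) ^ 2 + x ^ 2 ≠ 0 := by positivity
        exact_mod_cast this
      simp only [Pi.div_apply]
      rw [dwW_succ _ (by rw [Complex.ofReal_re]; positivity), mul_div_cancel_left₀ _ hpos]
    have hfin := (((hW2.mul_const (dwW (1/2) x)).mul_const (dwW (1/2) x)).mul_const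
      (dwW (1/2) x)).const_mul ((x : ℂ) * Complex.sinh (2 * Real.pi * x))
    refine hfin.trans (le_of_eq ?_)
    congr 1
    rw [dwW_half, dwW_one x hx, show (2 * Real.pi * x : ℂ) = 2 * (Real.pi * x) by ring,
      Complex.sinh_two_mul]
    have h1 := dw_sinh_ne x hx
    have h2 := dw_cosh_ne x
    push_cast
    generalize Complex.sinh (Real.pi * x) = S at *
    generalize Complex.cosh (Real.pi * x) = Ch at *
    field_simp
    ring

lemma dw_Gamma_half_sq : Complex.Gamma (1/2) ^ 2 = Real.pi := by
  have := Complex.Gamma_mul_Gamma_one_sub (1/2)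
  rw [show (1 : ℂ) - 1/2 = 1/2 by norm_num, show (Real.pi : ℂ) * (1/2) = Real.pi / 2 by ring,
    Complex.sin_pi_div_two] at this
  rw [sq, this]; simp

lemma dwR_lim0 : Tendsto (fun n : ℕ => dwR (((1 / ((n : ℝ) + 1) : ℝ)) : ℂ) (1/2) (1/2) (1/2)) atTop
    (𝓝 (2 * Real.pi)) := by
  have heps : Tendsto (fun n : ℕ => (1 / ((n : ℝ) + 1) : ℝ)) atTop (𝓝 0) :=
    tendsto_one_div_add_atTop_nhds_zero_nat
  have hepsC : Tendsto (fun n : ℕ => ((1 / ((n : ℝ) + 1) : ℝ) : ℂ)) atTop (𝓝 0) := by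
    have := (Complex.continuous_ofReal.tendsto 0).comp heps
    rw [Complex.ofReal_zero] at this
    exact this
  have hne : Complex.Gamma (0 + 1/2 + 1/2 + 1/2) ≠ 0 :=
    Complex.Gamma_ne_zero_of_re_pos (by norm_num)
  have hc : ContinuousAt (fun e : ℂ => dwR e (1/2) (1/2) (1/2)) 0 := by
    unfold dwR
    have c1 : ContinuousAt (fun e : ℂ => Complex.Gamma (e + 1/2)) 0 :=
      ContinuousAt.comp (f := fun e : ℂ => (e + 1/2 : ℂ))
          (dw_diffGamma _ (by simp)).continuousAt (by fun_prop)
    have c2 : ContinuousAt (fun e : ℂ => Complex.Gamma (e + 1/2 + 1/2 + 1/2)) 0 :=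
      ContinuousAt.comp (f := fun e : ℂ => (e + 1/2 + 1/2 + 1/2 : ℂ))
          (dw_diffGamma _ (by norm_num)).continuousAt (by fun_prop)
    exact ContinuousAt.div (by fun_prop) c2 hne
  have hval : dwR 0 (1/2) (1/2) (1/2) = 2 * Real.pi := by
    unfold dwR
    have h1 : (1/2 + 1/2 : ℂ) = 1 := by norm_num
    have h2 := Complex.Gamma_ne_zero_of_re_pos (s := 1/2) (by norm_num)
    rw [zero_add, h1, Complex.Gamma_one, show (1 + 1/2 : ℂ) = 1/2 + 1 by ring,
      Complex.Gamma_add_one _ (by norm_num), ← dw_Gamma_half_sq]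
    field_simp
  rw [← hval]
  exact hc.tendsto.comp hepsC

lemma dw_wilson (a b c d : ℂ) (ha : 0 < a.re) (hb : 0 < b.re) (hc : 0 < c.re) (hd : 0 < d.re) :
    dwI a b c d = 2 * Real.pi ^ 2 * dwR a b c d := by
  have hpi : (Real.pi : ℂ) ≠ 0 := by exact_mod_cast Real.pi_ne_zero
  have h := dwI_lim0.div dwR_lim0 (by simpa using hpi)
  have h2 : Tendsto (fun _ : ℕ => dwJ a b c d) atTop (𝓝 (4 * Real.pi ^ 3 / (2 * Real.pi))) := by
    refine h.congr fun n => ?_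
    rw [dwJ_const a b c d ((1 / ((n : ℝ) + 1) : ℝ) : ℂ) ha hb hc hd
      (by rw [Complex.ofReal_re]; positivity)]
    rfl
  have h3 := tendsto_nhds_unique tendsto_const_nhds h2
  unfold dwJ at h3
  rw [div_eq_iff (dwR_ne a b c d ha hb hc hd)] at h3
  rw [h3]
  field_simp
  ring

lemma dw_pointwise (T x : ℝ) :
    (((2 * x : ℝ)) : ℂ) * Complex.sinh (Real.pi * ((2 * x : ℝ) : ℂ)) *
      ∏ ε₁ ∈ ({1, -1} : Finset ℤ), ∏ ε₂ ∈ ({1, -1} : Finset ℤ),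
        complexBeta (1/4 + (ε₁ : ℂ) * Complex.I * ((2 * x : ℝ) : ℂ) / 2 + (ε₂ : ℂ) * Complex.I * (T : ℂ))
          (1/4 - (ε₁ : ℂ) * Complex.I * ((2 * x : ℝ) : ℂ) / 2) =
    (2 / (Complex.Gamma (1/2 + T * I) * Complex.Gamma (1/2 - T * I)) ^ 2) *
      ((x : ℂ) ^ 1 * Complex.sinh (2 * Real.pi * x) *
        (dwW (1/4 + T * I) x * dwW (1/4 - T * I) x * dwW (1/4) x * dwW (1/4) x)) := by
  have g1 := Complex.Gamma_ne_zero_of_re_pos (s := 1/2 + T * I) (by simp)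
  have g2 := Complex.Gamma_ne_zero_of_re_pos (s := 1/2 - T * I) (by simp)
  rw [Finset.prod_pair (by decide), Finset.prod_pair (by decide), Finset.prod_pair (by decide)]
  unfold complexBeta dwW
  push_cast
  rw [show (1/4 + 1 * I * (2 * (x:ℂ)) / 2 + 1 * I * T) = 1/4 + T * I + x * I by ring,
    show (1/4 + 1 * I * (2 * (x:ℂ)) / 2 + -1 * I * T) = 1/4 - T * I + x * I by ring,
    show (1/4 + -1 * I * (2 * (x:ℂ)) / 2 + 1 * I * T) = 1/4 + T * I - x * I by ring,
    show (1/4 + -1 * I * (2 * (x:ℂ)) / 2 + -1 * I * T) = 1/4 - T * I - x * I by ring,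
    show (1/4 - 1 * I * (2 * (x:ℂ)) / 2) = 1/4 - x * I by ring,
    show (1/4 - -1 * I * (2 * (x:ℂ)) / 2) = 1/4 + x * I by ring,
    show 1/4 + T * I + x * I + (1/4 - x * I) = 1/2 + T * I by ring,
    show 1/4 - T * I + x * I + (1/4 - x * I) = 1/2 - T * I by ring,
    show 1/4 + T * I - x * I + (1/4 + x * I) = 1/2 + T * I by ring,
    show 1/4 - T * I - x * I + (1/4 + x * I) = 1/2 - T * I by ring,
    show (Real.pi : ℂ) * (2 * x) = 2 * Real.pi * x by ring]
  field_simp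

/-- The de Branges–Wilson beta integral: for every real `T`,
`∫_{ℝ} t sinh(πt) ∏_{ε₁,ε₂ = ±1} B(1/4 + ε₁ i t/2 + ε₂ i T, 1/4 − ε₁ i t/2) dt = 8π³`,
and the integrand is absolutely integrable. -/
theorem deBranges_Wilson_beta_integral (T : ℝ) :
    Integrable (fun t : ℝ => (t : ℂ) * Complex.sinh (Real.pi * t) *
      ∏ ε₁ ∈ ({1, -1} : Finset ℤ), ∏ ε₂ ∈ ({1, -1} : Finset ℤ),
        complexBeta (1/4 + (ε₁ : ℂ) * Complex.I * (t : ℂ) / 2 + (ε₂ : ℂ) * Complex.I * (T : ℂ))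
          (1/4 - (ε₁ : ℂ) * Complex.I * (t : ℂ) / 2)) ∧
    (∫ t : ℝ, (t : ℂ) * Complex.sinh (Real.pi * t) *
      ∏ ε₁ ∈ ({1, -1} : Finset ℤ), ∏ ε₂ ∈ ({1, -1} : Finset ℤ),
        complexBeta (1/4 + (ε₁ : ℂ) * Complex.I * (t : ℂ) / 2 + (ε₂ : ℂ) * Complex.I * (T : ℂ))
          (1/4 - (ε₁ : ℂ) * Complex.I * (t : ℂ) / 2))
      = 8 * (Real.pi : ℂ) ^ 3 := by
  have q1 : 0 < (1/4 + T * I : ℂ).re := by simp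
  have q2 : 0 < (1/4 - T * I : ℂ).re := by simp
  have q3 : 0 < (1/4 : ℂ).re := by norm_num
  have J := dw_int4 1 (1/4 + T * I) (1/4 - T * I) (1/4) (1/4) q1 q2 q3 q3
  have J' := J.const_mul (2 / (Complex.Gamma (1/2 + T * I) * Complex.Gamma (1/2 - T * I)) ^ 2)
  constructor
  · rw [← integrable_comp_mul_left_iff _ (two_ne_zero : (2:ℝ) ≠ 0)]
    simp only [dw_pointwise]
    exact J'
  · have h := Measure.integral_comp_mul_left (fun t : ℝ => (t : ℂ) * Complex.sinh (Real.pi * t) *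
      ∏ ε₁ ∈ ({1, -1} : Finset ℤ), ∏ ε₂ ∈ ({1, -1} : Finset ℤ),
        complexBeta (1/4 + (ε₁ : ℂ) * Complex.I * (t : ℂ) / 2 + (ε₂ : ℂ) * Complex.I * (T : ℂ))
          (1/4 - (ε₁ : ℂ) * Complex.I * (t : ℂ) / 2)) 2
    simp only [dw_pointwise] at h
    rw [integral_const_mul] at h
    have hw := dw_wilson (1/4 + T * I) (1/4 - T * I) (1/4) (1/4) q1 q2 q3 q3
    unfold dwI at hw
    simp only [pow_one] at h
    rw [hw, abs_of_pos (by norm_num), Complex.real_smul] at h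
    have hR : dwR (1/4 + T * I) (1/4 - T * I) (1/4) (1/4) =
        Real.pi * (Complex.Gamma (1/2 + T * I) * Complex.Gamma (1/2 - T * I)) ^ 2 := by
      unfold dwR
      rw [show (1/4 + T * I + (1/4 - T * I) + 1/4 + 1/4 : ℂ) = 1 by ring,
        show (1/4 + T * I + (1/4 - T * I) : ℂ) = 1/2 by ring,
        show (1/4 + T * I + 1/4 : ℂ) = 1/2 + T * I by ring,
        show (1/4 - T * I + 1/4 : ℂ) = 1/2 - T * I by ring,
        show (1/4 + 1/4 : ℂ) = 1/2 by norm_num, Complex.Gamma_one, ← dw_Gamma_half_sq]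
      ring
    have g1 := Complex.Gamma_ne_zero_of_re_pos (s := 1/2 + T * I) (by simp)
    have g2 := Complex.Gamma_ne_zero_of_re_pos (s := 1/2 - T * I) (by simp)
    rw [hR] at h
    have h5 : (2 / (Complex.Gamma (1/2 + T * I) * Complex.Gamma (1/2 - T * I)) ^ 2) *
        (2 * Real.pi ^ 2 * (Real.pi * (Complex.Gamma (1/2 + T * I) * Complex.Gamma (1/2 - T * I)) ^ 2))
        = (4 * Real.pi ^ 3 : ℂ) := by
      generalize Complex.Gamma (1/2 + T * I) = A at g1 ⊢
      generalize Complex.Gamma (1/2 - T * I) = B at g2 ⊢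
      field_simp
      ring
    rw [h5] at h
    push_cast at h
    linear_combination (-2) * h
end

section
/- Let N ≥ 1 and let χ₁, χ₂, χ₃, χ₄ be Dirichlet characters modulo N. Let s₁, s₂, s₃, s₄ be complex numbers with Re(sⱼ) > 1/2 for j = 1,2,3,4 (so in particular Re(sᵢ + sⱼ) > 1 for i ∈ {1,2}, j ∈ {3,4}, and Re(s₁+s₂+s₃+s₄) > 2). Then the absolutely convergent quadruple sum over positive integers n₁, n₂, n₃, n₄ with n₁n₂ = n₃n₄ of χ₁(n₁)χ₂(n₂)χ₃(n₃)χ₄(n₄) · n₁^{−s₁} n₂^{−s₂} n₃^{−s₃} n₄^{−s₄} satisfies: (that sum) · L(s₁+s₂+s₃+s₄, χ₁χ₂χ₃χ₄) = L(s₁+s₃, χ₁χ₃) · L(s₁+s₄, χ₁χ₄) · L(s₂+s₃, χ₂χ₃) · L(s₂+s₄, χ₂χ₄). -/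
open Complex

/-- For `Re(s) > 1`, the absolutely convergent Dirichlet series
`L(s, ψ) = ∑_{n ≥ 1} ψ(n) n^{-s}` of a Dirichlet character `ψ` mod `N`. -/
noncomputable def dirichletLSeries {N : ℕ} (ψ : DirichletCharacter ℂ N) (s : ℂ) : ℂ :=
  ∑' n : ℕ+, ψ ((n : ℕ) : ZMod N) / ((n : ℕ) : ℂ) ^ s

abbrev CopT : Type := {p : ℕ+ × ℕ+ × ℕ+ × ℕ+ // Nat.Coprime (p.2.1 : ℕ) (p.2.2.1 : ℕ)}

def diagMap (t : CopT) : ℕ+ × ℕ+ × ℕ+ × ℕ+ :=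
  (t.1.1 * t.1.2.1, t.1.2.2.1 * t.1.2.2.2, t.1.1 * t.1.2.2.1, t.1.2.1 * t.1.2.2.2)

def scaleMap (t : CopT × ℕ+) : ℕ+ × ℕ+ × ℕ+ × ℕ+ :=
  (t.1.1.1, t.1.1.2.1 * t.2, t.1.1.2.2.1 * t.2, t.1.1.2.2.2)

lemma pnat_exists_coprime (m n : ℕ+) :
    ∃ g b c : ℕ+, Nat.Coprime (b : ℕ) (c : ℕ) ∧ m = b * g ∧ n = c * g := by
  obtain ⟨b, c, h, hb, hc⟩ := Nat.exists_coprime (m : ℕ) (n : ℕ)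
  have hm := m.pos
  have hn := n.pos
  have hg : 0 < Nat.gcd (m : ℕ) n := Nat.gcd_pos_of_pos_left _ hm
  have hb0 : 0 < b := by
    rcases Nat.eq_zero_or_pos b with h0 | h0
    · rw [h0, zero_mul] at hb; omega
    · exact h0
  have hc0 : 0 < c := by
    rcases Nat.eq_zero_or_pos c with h0 | h0
    · rw [h0, zero_mul] at hc; omega
    · exact h0
  refine ⟨⟨_, hg⟩, ⟨b, hb0⟩, ⟨c, hc0⟩, h, ?_, ?_⟩
  · exact PNat.eq hb
  · exact PNat.eq hc

lemma pnat_coprime_unique {a b c a' b' c' : ℕ+} (h : Nat.Coprime (b : ℕ) (c : ℕ))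
    (h' : Nat.Coprime (b' : ℕ) (c' : ℕ)) (h1 : a * b = a' * b') (h2 : a * c = a' * c') :
    a = a' ∧ b = b' ∧ c = c' := by
  have h1' : (a : ℕ) * b = a' * b' := by exact_mod_cast congrArg PNat.val h1
  have h2' : (a : ℕ) * c = a' * c' := by exact_mod_cast congrArg PNat.val h2
  have e : a = a' := by
    apply PNat.eq
    have e1 : Nat.gcd ((a : ℕ) * b) (a * c) = a := by rw [Nat.gcd_mul_left, h, mul_one]
    have e2 : Nat.gcd ((a' : ℕ) * b') (a' * c') = a' := by rw [Nat.gcd_mul_left, h', mul_one]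
    rw [← e1, ← e2, h1', h2']
  subst e
  exact ⟨rfl, mul_left_cancel h1, mul_left_cancel h2⟩

lemma diagMap_injective : Function.Injective diagMap := by
  rintro ⟨⟨a, b, c, d⟩, h⟩ ⟨⟨a', b', c', d'⟩, h'⟩ e
  simp only [diagMap, Prod.mk.injEq] at e
  obtain ⟨e1, e2, e3, e4⟩ := e
  obtain ⟨rfl, rfl, rfl⟩ := pnat_coprime_unique h h' e1 e3
  obtain rfl := mul_left_cancel e2
  rfl

lemma diagMap_range (q : ℕ+ × ℕ+ × ℕ+ × ℕ+) (hq : q.1 * q.2.1 = q.2.2.1 * q.2.2.2) :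
    q ∈ Set.range diagMap := by
  obtain ⟨n1, n2, n3, n4⟩ := q
  simp only at hq
  obtain ⟨a, b, c, h, rfl, rfl⟩ := pnat_exists_coprime n1 n3
  have hq' : b * n2 = c * n4 := by
    apply mul_left_cancel (a := a)
    calc a * (b * n2) = b * a * n2 := by ring
      _ = c * a * n4 := hq
      _ = a * (c * n4) := by ring
  have hd : c ∣ n2 := by
    rw [PNat.dvd_iff]
    have : (c : ℕ) ∣ b * n2 := ⟨n4, by exact_mod_cast congrArg PNat.val hq'⟩
    exact h.symm.dvd_of_dvd_mul_left this
  obtain ⟨d, rfl⟩ := hd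
  have h4 : n4 = b * d := by
    apply mul_left_cancel (a := c)
    rw [← hq']; ring
  subst h4
  exact ⟨⟨(a, b, c, d), h⟩, by simp [diagMap, mul_comm]⟩

lemma scaleMap_bijective : Function.Bijective scaleMap := by
  constructor
  · rintro ⟨⟨⟨a, b, c, d⟩, h⟩, k⟩ ⟨⟨⟨a', b', c', d'⟩, h'⟩, k'⟩ e
    simp only [scaleMap, Prod.mk.injEq] at e
    obtain ⟨rfl, e2, e3, rfl⟩ := e
    rw [mul_comm b, mul_comm b'] at e2
    rw [mul_comm c, mul_comm c'] at e3
    obtain ⟨rfl, rfl, rfl⟩ := pnat_coprime_unique h h' e2 e3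
    rfl
  · rintro ⟨a, b, c, d⟩
    obtain ⟨k, b, c, h, rfl, rfl⟩ := pnat_exists_coprime b c
    exact ⟨⟨⟨(a, b, c, d), h⟩, k⟩, rfl⟩

lemma four_prod (u v w x : ℕ+ → ℂ) (hu : Summable fun n => ‖u n‖) (hv : Summable fun n => ‖v n‖)
    (hw : Summable fun n => ‖w n‖) (hx : Summable fun n => ‖x n‖) :
    (Summable fun p : ℕ+ × ℕ+ × ℕ+ × ℕ+ => ‖u p.1 * (v p.2.1 * (w p.2.2.1 * x p.2.2.2))‖) ∧
    ∑' p : ℕ+ × ℕ+ × ℕ+ × ℕ+, u p.1 * (v p.2.1 * (w p.2.2.1 * x p.2.2.2)) =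
      (∑' n, u n) * (∑' n, v n) * (∑' n, w n) * (∑' n, x n) := by
  obtain ⟨P, hP⟩ : ∃ P : ℕ+ × ℕ+ → ℂ, P = fun p => w p.1 * x p.2 := ⟨_, rfl⟩
  have sP : Summable fun p => ‖P p‖ := by
    rw [hP]
    exact Summable.mul_norm (f := w) (g := x) hw hx
  have eP : (∑' n, w n) * (∑' n, x n) = ∑' p, P p := by
    rw [hP]
    exact tsum_mul_tsum_of_summable_norm (f := w) (g := x) hw hx
  obtain ⟨Q, hQ⟩ : ∃ Q : ℕ+ × ℕ+ × ℕ+ → ℂ, Q = fun p => v p.1 * P p.2 := ⟨_, rfl⟩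
  have sQ : Summable fun p => ‖Q p‖ := by
    rw [hQ]
    exact Summable.mul_norm (f := v) (g := P) hv sP
  have eQ : (∑' n, v n) * (∑' n, P n) = ∑' p, Q p := by
    rw [hQ]
    exact tsum_mul_tsum_of_summable_norm (f := v) (g := P) hv sP
  have hR : (fun p : ℕ+ × ℕ+ × ℕ+ × ℕ+ => u p.1 * (v p.2.1 * (w p.2.2.1 * x p.2.2.2))) =
      fun p => u p.1 * Q p.2 := by
    funext p
    rw [hQ, hP]
  have sR := Summable.mul_norm (f := u) (g := Q) hu sQ
  have eR := tsum_mul_tsum_of_summable_norm (f := u) (g := Q) hu sQ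
  constructor
  · simp only [hQ, hP] at sR
    exact sR
  · rw [hR, mul_assoc, mul_assoc, eP, eQ, eR]

theorem ramanujan_abstract (f₁ f₂ f₃ f₄ : ℕ+ → ℂ)
    (m₁ : ∀ a b, f₁ (a * b) = f₁ a * f₁ b) (m₂ : ∀ a b, f₂ (a * b) = f₂ a * f₂ b)
    (m₃ : ∀ a b, f₃ (a * b) = f₃ a * f₃ b) (m₄ : ∀ a b, f₄ (a * b) = f₄ a * f₄ b)
    (h13 : Summable fun n => ‖f₁ n * f₃ n‖) (h14 : Summable fun n => ‖f₁ n * f₄ n‖)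
    (h23 : Summable fun n => ‖f₂ n * f₃ n‖) (h24 : Summable fun n => ‖f₂ n * f₄ n‖)
    (h1234 : Summable fun n => ‖f₁ n * f₂ n * f₃ n * f₄ n‖) :
    Summable (fun q : ℕ+ × ℕ+ × ℕ+ × ℕ+ =>
      ‖(if (q.1 * q.2.1 : ℕ+) = q.2.2.1 * q.2.2.2 then
          f₁ q.1 * f₂ q.2.1 * f₃ q.2.2.1 * f₄ q.2.2.2 else 0)‖) ∧
    (∑' q : ℕ+ × ℕ+ × ℕ+ × ℕ+,
      if (q.1 * q.2.1 : ℕ+) = q.2.2.1 * q.2.2.2 then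
          f₁ q.1 * f₂ q.2.1 * f₃ q.2.2.1 * f₄ q.2.2.2 else 0) *
        (∑' n, f₁ n * f₂ n * f₃ n * f₄ n)
      = (∑' n, f₁ n * f₃ n) * (∑' n, f₁ n * f₄ n) * (∑' n, f₂ n * f₃ n) *
        (∑' n, f₂ n * f₄ n) := by
  obtain ⟨F, hF⟩ : ∃ F : ℕ+ × ℕ+ × ℕ+ × ℕ+ → ℂ, F = (fun q =>
    if (q.1 * q.2.1 : ℕ+) = q.2.2.1 * q.2.2.2 then
          f₁ q.1 * f₂ q.2.1 * f₃ q.2.2.1 * f₄ q.2.2.2 else 0) := ⟨_, rfl⟩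
  suffices H : Summable (fun q => ‖F q‖) ∧ (∑' q, F q) * (∑' n, f₁ n * f₂ n * f₃ n * f₄ n)
      = (∑' n, f₁ n * f₃ n) * (∑' n, f₁ n * f₄ n) * (∑' n, f₂ n * f₃ n) *
        (∑' n, f₂ n * f₄ n) by
    rw [hF] at H
    exact H
  obtain ⟨G, hG⟩ : ∃ G : ℕ+ × ℕ+ × ℕ+ × ℕ+ → ℂ, G = (fun p =>
    (f₁ p.1 * f₃ p.1) * ((f₁ p.2.1 * f₄ p.2.1) *
      ((f₂ p.2.2.1 * f₃ p.2.2.1) * (f₂ p.2.2.2 * f₄ p.2.2.2)))) := ⟨_, rfl⟩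
  have n4 : Summable fun p => ‖G p‖ := by
    rw [hG]
    exact (four_prod (fun n => f₁ n * f₃ n) (fun n => f₁ n * f₄ n) (fun n => f₂ n * f₃ n)
      (fun n => f₂ n * f₄ n) h13 h14 h23 h24).1
  have hGsum : ∑' p, G p = (∑' n, f₁ n * f₃ n) * (∑' n, f₁ n * f₄ n) * (∑' n, f₂ n * f₃ n) *
        (∑' n, f₂ n * f₄ n) := by
    rw [hG]
    exact (four_prod (fun n => f₁ n * f₃ n) (fun n => f₁ n * f₄ n) (fun n => f₂ n * f₃ n)
      (fun n => f₂ n * f₄ n) h13 h14 h23 h24).2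
  have hsupp : Function.support F ⊆ Set.range diagMap := by
    intro q hq
    apply diagMap_range
    by_contra hne
    exact hq (by rw [hF]; exact if_neg hne)
  have hFG : ∀ t : CopT, F (diagMap t) = G t.1 := by
    rintro ⟨⟨a, b, c, d⟩, h⟩
    have : a * b * (c * d) = a * c * (b * d) := by ring
    have e : F (diagMap ⟨(a, b, c, d), h⟩) =
        f₁ (a * b) * f₂ (c * d) * f₃ (a * c) * f₄ (b * d) := by
      rw [hF]; exact if_pos this
    rw [e, m₁, m₂, m₃, m₄]
    simp only [hG]
    ring
  have nT : Summable fun t : CopT => ‖G t.1‖ := n4.comp_injective Subtype.val_injective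
  refine ⟨?_, ?_⟩
  · rw [← diagMap_injective.summable_iff]
    · refine nT.congr fun t => ?_
      simp only [Function.comp, hFG]
    · intro q hq
      have : F q = 0 := by
        by_contra h0
        exact hq (hsupp h0)
      simp [this]
  · rw [← diagMap_injective.tsum_eq hsupp]
    simp only [hFG]
    rw [tsum_mul_tsum_of_summable_norm nT h1234, ← hGsum,
      ← (Equiv.ofBijective scaleMap scaleMap_bijective).tsum_eq G]
    refine tsum_congr ?_
    rintro ⟨⟨⟨a, b, c, d⟩, h⟩, k⟩
    simp only [hG, Equiv.ofBijective_apply, scaleMap, m₁, m₂, m₃, m₄]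
    ring

lemma dterm_mul {N : ℕ} (χ : DirichletCharacter ℂ N) (s : ℂ) (a b : ℕ+) :
    χ (((a * b : ℕ+) : ℕ) : ZMod N) / (((a * b : ℕ+) : ℕ) : ℂ) ^ s =
      χ ((a : ℕ) : ZMod N) / ((a : ℕ) : ℂ) ^ s * (χ ((b : ℕ) : ZMod N) / ((b : ℕ) : ℂ) ^ s) := by
  rw [PNat.mul_coe, Nat.cast_mul, Nat.cast_mul, map_mul, Complex.natCast_mul_natCast_cpow,
    mul_div_mul_comm]

lemma pnat_cpow_add (n : ℕ+) (s t : ℂ) :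
    ((n : ℕ) : ℂ) ^ (s + t) = ((n : ℕ) : ℂ) ^ s * ((n : ℕ) : ℂ) ^ t :=
  Complex.cpow_add _ _ (by exact_mod_cast n.ne_zero)

lemma dterm_summable {N : ℕ} (χ : DirichletCharacter ℂ N) (s : ℂ) (hs : 1 < s.re) :
    Summable fun n : ℕ+ => ‖χ ((n : ℕ) : ZMod N) / ((n : ℕ) : ℂ) ^ s‖ := by
  have h := (Real.summable_nat_rpow_inv.mpr hs).comp_injective PNat.coe_injective
  refine Summable.of_nonneg_of_le (fun _ => norm_nonneg _) (fun n => ?_) h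
  rw [norm_div, Complex.norm_natCast_cpow_of_pos n.pos, Function.comp_apply, div_eq_mul_inv]
  exact mul_le_of_le_one_left (by positivity) (χ.norm_le_one _)

/-- Ramanujan's identity for twisted Dirichlet series: the diagonal quadruple sum
`∑_{n₁n₂ = n₃n₄} χ₁(n₁)χ₂(n₂)χ₃(n₃)χ₄(n₄) n₁^{-s₁} n₂^{-s₂} n₃^{-s₃} n₄^{-s₄}`
is absolutely convergent and, multiplied by `L(s₁+s₂+s₃+s₄, χ₁χ₂χ₃χ₄)`, equals
`L(s₁+s₃, χ₁χ₃) L(s₁+s₄, χ₁χ₄) L(s₂+s₃, χ₂χ₃) L(s₂+s₄, χ₂χ₄)`. -/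
theorem ramanujan_identity_twisted {N : ℕ} (hN : 1 ≤ N)
    (χ₁ χ₂ χ₃ χ₄ : DirichletCharacter ℂ N) (s₁ s₂ s₃ s₄ : ℂ)
    (h₁ : 1/2 < s₁.re) (h₂ : 1/2 < s₂.re) (h₃ : 1/2 < s₃.re) (h₄ : 1/2 < s₄.re) :
    Summable (fun q : ℕ+ × ℕ+ × ℕ+ × ℕ+ =>
      ‖(if (q.1 * q.2.1 : ℕ+) = q.2.2.1 * q.2.2.2 then
          χ₁ ((q.1 : ℕ) : ZMod N) * χ₂ ((q.2.1 : ℕ) : ZMod N) *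
            χ₃ ((q.2.2.1 : ℕ) : ZMod N) * χ₄ ((q.2.2.2 : ℕ) : ZMod N) /
            (((q.1 : ℕ) : ℂ) ^ s₁ * ((q.2.1 : ℕ) : ℂ) ^ s₂ *
              ((q.2.2.1 : ℕ) : ℂ) ^ s₃ * ((q.2.2.2 : ℕ) : ℂ) ^ s₄)
        else 0)‖) ∧
    (∑' q : ℕ+ × ℕ+ × ℕ+ × ℕ+,
      if (q.1 * q.2.1 : ℕ+) = q.2.2.1 * q.2.2.2 then
          χ₁ ((q.1 : ℕ) : ZMod N) * χ₂ ((q.2.1 : ℕ) : ZMod N) *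
            χ₃ ((q.2.2.1 : ℕ) : ZMod N) * χ₄ ((q.2.2.2 : ℕ) : ZMod N) /
            (((q.1 : ℕ) : ℂ) ^ s₁ * ((q.2.1 : ℕ) : ℂ) ^ s₂ *
              ((q.2.2.1 : ℕ) : ℂ) ^ s₃ * ((q.2.2.2 : ℕ) : ℂ) ^ s₄)
        else 0) * dirichletLSeries (χ₁ * χ₂ * χ₃ * χ₄) (s₁ + s₂ + s₃ + s₄)
      = dirichletLSeries (χ₁ * χ₃) (s₁ + s₃) * dirichletLSeries (χ₁ * χ₄) (s₁ + s₄) *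
        dirichletLSeries (χ₂ * χ₃) (s₂ + s₃) * dirichletLSeries (χ₂ * χ₄) (s₂ + s₄) := by
  have e2 : ∀ (χ ψ : DirichletCharacter ℂ N) (s t : ℂ) (n : ℕ+),
      (χ * ψ) ((n : ℕ) : ZMod N) / ((n : ℕ) : ℂ) ^ (s + t) =
      χ ((n : ℕ) : ZMod N) / ((n : ℕ) : ℂ) ^ s * (ψ ((n : ℕ) : ZMod N) / ((n : ℕ) : ℂ) ^ t) := by
    intro χ ψ s t n
    rw [pnat_cpow_add, MulChar.mul_apply, mul_div_mul_comm]
  have S : ∀ (χ ψ : DirichletCharacter ℂ N) (s t : ℂ), 1/2 < s.re → 1/2 < t.re →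
      Summable fun n : ℕ+ => ‖χ ((n : ℕ) : ZMod N) / ((n : ℕ) : ℂ) ^ s *
        (ψ ((n : ℕ) : ZMod N) / ((n : ℕ) : ℂ) ^ t)‖ := by
    intro χ ψ s t hs ht
    have := dterm_summable (χ * ψ) (s + t) (by rw [Complex.add_re]; linarith)
    simpa only [e2] using this
  have S4 := dterm_summable (χ₁ * χ₂ * χ₃ * χ₄) (s₁ + s₂ + s₃ + s₄)
    (by simp only [Complex.add_re]; linarith)
  simp only [e2] at S4
  have key := ramanujan_abstract _ _ _ _ (dterm_mul χ₁ s₁) (dterm_mul χ₂ s₂) (dterm_mul χ₃ s₃)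
    (dterm_mul χ₄ s₄) (S χ₁ χ₃ s₁ s₃ h₁ h₃) (S χ₁ χ₄ s₁ s₄ h₁ h₄) (S χ₂ χ₃ s₂ s₃ h₂ h₃)
    (S χ₂ χ₄ s₂ s₄ h₂ h₄) S4
  simp only [dirichletLSeries, e2]
  simpa only [div_mul_div_comm] using key
end

section
/- Define g(x) = ∫_x^∞ K₀(y)² dy for x > 0. Then for every complex number s with Re(s) > 0, the Mellin transform ∫₀^∞ g(x)·x^{s−1} dx converges absolutely and equals 2^{s−2} · Γ((1+s)/2)⁴ / (s·Γ(1+s)). -/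
open MeasureTheory Complex

/-- The modified Bessel function of the second kind of order `0`:
`K₀(y) = ∫₀^∞ exp(−y cosh t) dt` for `y > 0`. -/
noncomputable def besselK0 (y : ℝ) : ℝ :=
  ∫ t in Set.Ioi (0 : ℝ), Real.exp (-y * Real.cosh t)

/-- The incomplete integral `g(x) = ∫_x^∞ K₀(y)² dy`. -/
noncomputable def gK0 (x : ℝ) : ℝ :=
  ∫ y in Set.Ioi x, (besselK0 y) ^ 2

lemma aux_cpow (r : ℝ) (hr : 0 < r) (z : ℂ) : (r : ℂ) ^ z = Complex.exp ((Real.log r : ℂ) * z) := by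
  rw [Complex.cpow_def_of_ne_zero (by exact_mod_cast hr.ne'), Complex.ofReal_log hr.le]

lemma aux_pq (t : ℝ) : Real.sigmoid (2 * t) * (1 - Real.sigmoid (2 * t)) = ((2 * Real.cosh t) ^ 2)⁻¹ := by
  rw [← Real.sigmoid_neg, Real.sigmoid_def, Real.sigmoid_def, Real.cosh_eq, ← mul_inv]
  congr 1
  have h1 : Real.exp (-(2 * t)) = Real.exp (-t) ^ 2 := by rw [← Real.exp_nat_mul]; congr 1; push_cast; ring
  have h2 : Real.exp (- -(2 * t)) = Real.exp t ^ 2 := by rw [← Real.exp_nat_mul]; congr 1; push_cast; ring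
  have h3 : Real.exp t * Real.exp (-t) = 1 := by rw [← Real.exp_add]; simp
  rw [h1, h2]
  have : Real.exp (-t) ^ 2 * Real.exp t ^ 2 = 1 := by rw [← mul_pow, mul_comm, h3]; norm_num
  nlinarith

lemma aux_integrand (w : ℂ) (t : ℝ) :
    |Real.sigmoid (2 * t) * (1 - Real.sigmoid (2 * t)) * 2| •
      (((Real.sigmoid (2 * t) : ℝ) : ℂ) ^ (w / 2 - 1) * (1 - ((Real.sigmoid (2 * t) : ℝ) : ℂ)) ^ (w / 2 - 1))
      = (2 : ℂ) ^ (1 - w) * ((Real.cosh t : ℝ) : ℂ) ^ (-w) := by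
  have hpq := aux_pq t
  set p := Real.sigmoid (2 * t) with hp
  have hp0 : 0 < p := Real.sigmoid_pos _
  have hq0 : 0 < 1 - p := by have := Real.sigmoid_lt_one (2 * t); linarith
  have hc : 0 < Real.cosh t := Real.cosh_pos t
  have hl : Real.log p + Real.log (1 - p) = -2 * (Real.log 2 + Real.log (Real.cosh t)) := by
    rw [← Real.log_mul hp0.ne' hq0.ne', hpq, Real.log_inv, Real.log_pow, Real.log_mul two_ne_zero hc.ne']
    push_cast; ring
  rw [abs_of_pos (by positivity)]
  have e1 : (1 - (p : ℂ)) = ((1 - p : ℝ) : ℂ) := by push_cast; rfl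
  have e2 : (2 : ℂ) = ((2 : ℝ) : ℂ) := by norm_num
  have e3 : p * (1 - p) * 2 = Real.exp (Real.log p + Real.log (1 - p) + Real.log 2) := by
    rw [Real.exp_add, Real.exp_add, Real.exp_log hp0, Real.exp_log hq0, Real.exp_log two_pos]
  rw [e1, aux_cpow p hp0, aux_cpow _ hq0, aux_cpow _ hc, Complex.real_smul, e3,
    show (2 : ℂ) ^ (1 - w) = ((2 : ℝ) : ℂ) ^ (1 - w) by norm_num, aux_cpow 2 two_pos, Complex.ofReal_exp,
    ← Complex.exp_add, ← Complex.exp_add, ← Complex.exp_add]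
  congr 1
  have hl' : (Real.log p : ℂ) + Real.log (1 - p) = -2 * (Real.log 2 + Real.log (Real.cosh t)) := by
    exact_mod_cast hl
  push_cast [-Complex.ofReal_cosh]
  linear_combination (w / 2) * hl'

lemma aux_A (w : ℂ) (hw : 0 < w.re) :
    Integrable (fun t : ℝ => ((Real.cosh t : ℝ) : ℂ) ^ (-w)) ∧
    ∫ t : ℝ, ((Real.cosh t : ℝ) : ℂ) ^ (-w) = 2 ^ (w - 1) * Complex.Gamma (w / 2) ^ 2 / Complex.Gamma w := by
  have hw2 : 0 < (w / 2).re := by simpa using hw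
  have himg : (fun t : ℝ => Real.sigmoid (2 * t)) '' Set.univ = Set.Ioo 0 1 := by
    rw [← Real.range_sigmoid, Set.image_univ]
    exact (mul_left_surjective₀ (two_ne_zero' ℝ)).range_comp Real.sigmoid
  have hder : ∀ x ∈ (Set.univ : Set ℝ), HasDerivWithinAt (fun t : ℝ => Real.sigmoid (2 * t))
      (Real.sigmoid (2 * x) * (1 - Real.sigmoid (2 * x)) * 2) Set.univ x := by
    intro x _
    have := (Real.hasDerivAt_sigmoid (2 * x)).comp x ((hasDerivAt_id x).const_mul 2)
    have := this.hasDerivWithinAt (s := Set.univ)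
    simpa [Function.comp_def] using this
  have hinj : Set.InjOn (fun t : ℝ => Real.sigmoid (2 * t)) Set.univ := by
    intro a _ b _ h
    have := Real.sigmoid_injective h
    linarith
  have h2 : (2 : ℂ) ^ (1 - w) ≠ 0 := by simp [Complex.cpow_eq_zero_iff]
  have hI := integrableOn_image_iff_integrableOn_abs_deriv_smul MeasurableSet.univ hder hinj
    (fun x : ℝ => (x : ℂ) ^ (w / 2 - 1) * (1 - (x : ℂ)) ^ (w / 2 - 1))
  have hE := integral_image_eq_integral_abs_deriv_smul MeasurableSet.univ hder hinj
    (fun x : ℝ => (x : ℂ) ^ (w / 2 - 1) * (1 - (x : ℂ)) ^ (w / 2 - 1))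
  simp only [aux_integrand] at hI hE
  rw [himg] at hI hE
  have hb := Complex.betaIntegral_convergent hw2 hw2
  rw [intervalIntegrable_iff_integrableOn_Ioo_of_le zero_le_one] at hb
  have hbe := Complex.betaIntegral_eq_Gamma_mul_div _ _ hw2 hw2
  rw [Complex.betaIntegral, intervalIntegral.integral_of_le zero_le_one, integral_Ioc_eq_integral_Ioo, hE,
    setIntegral_univ, integral_const_mul, add_halves] at hbe
  have hI' := hI.1 hb
  rw [integrableOn_univ] at hI'
  refine ⟨(integrable_const_mul_iff (isUnit_iff_ne_zero.2 h2) _).1 hI', ?_⟩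
  apply mul_left_cancel₀ h2
  rw [hbe, ← mul_div_assoc, ← mul_assoc, ← Complex.cpow_add _ _ two_ne_zero]
  simp [pow_two]

noncomputable def auxL : (ℝ × ℝ) →ₗ[ℝ] (ℝ × ℝ) :=
  Matrix.toLin (Module.Basis.finTwoProd ℝ) (Module.Basis.finTwoProd ℝ) !![1, 1; 1, -1]

lemma auxL_apply (p : ℝ × ℝ) : auxL p = (p.1 + p.2, p.1 - p.2) := by
  rw [auxL, Matrix.toLin_finTwoProd_apply]; ext <;> simp [sub_eq_add_neg]

lemma auxL_det : LinearMap.det auxL = -2 := by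
  rw [auxL, LinearMap.det_toLin]; simp [Matrix.det_fin_two]; norm_num

lemma auxL_map : Measure.map auxL (volume : Measure (ℝ × ℝ)) = ENNReal.ofReal (1 / 2) • volume := by
  rw [Measure.map_linearMap_addHaar_eq_smul_addHaar _ (by rw [auxL_det]; norm_num), auxL_det]
  norm_num [abs_of_pos]

lemma auxL_emb : MeasurableEmbedding auxL := by
  have hinj : Function.Injective auxL := by
    intro a b h
    rw [auxL_apply, auxL_apply, Prod.mk.injEq] at h
    ext <;> linarith [h.1, h.2]
  exact (auxL.continuous_of_finiteDimensional).measurableEmbedding hinj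

lemma aux_cosh (a b : ℝ) : Real.cosh (a + b) + Real.cosh (a - b) = 2 * (Real.cosh a * Real.cosh b) := by
  rw [Real.cosh_add, Real.cosh_sub]; ring

lemma aux_B0 (w : ℂ) (a b : ℝ) : ((Real.cosh (a + b) + Real.cosh (a - b) : ℝ) : ℂ) ^ (-w) =
    2 ^ (-w) * ((Real.cosh a : ℂ) ^ (-w) * (Real.cosh b : ℂ) ^ (-w)) := by
  have ha := Real.cosh_pos a
  have hb := Real.cosh_pos b
  rw [aux_cosh, Complex.ofReal_mul, Complex.mul_cpow_ofReal_nonneg (by norm_num) (by positivity), Complex.ofReal_mul,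
    Complex.mul_cpow_ofReal_nonneg ha.le hb.le]
  norm_num

lemma aux_B (w : ℂ) (hw : 0 < w.re) :
    Integrable (fun p : ℝ × ℝ => ((Real.cosh p.1 + Real.cosh p.2 : ℝ) : ℂ) ^ (-w)) ∧
    ∫ p : ℝ × ℝ, ((Real.cosh p.1 + Real.cosh p.2 : ℝ) : ℂ) ^ (-w)
      = 2 * 2 ^ (-w) * (2 ^ (w - 1) * Complex.Gamma (w / 2) ^ 2 / Complex.Gamma w) ^ 2 := by
  obtain ⟨hi, he⟩ := aux_A w hw
  have h1 := auxL_emb.integrable_map_iff (μ := volume)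
    (g := fun p : ℝ × ℝ => ((Real.cosh p.1 + Real.cosh p.2 : ℝ) : ℂ) ^ (-w))
  have h2 := auxL_emb.integral_map (μ := volume)
    (fun p : ℝ × ℝ => ((Real.cosh p.1 + Real.cosh p.2 : ℝ) : ℂ) ^ (-w))
  rw [auxL_map] at h1 h2
  simp only [Function.comp_def, auxL_apply, aux_B0] at h1 h2
  rw [integral_smul_measure, integral_const_mul, Measure.volume_eq_prod,
    integral_prod_mul (μ := (volume : Measure ℝ)) (ν := (volume : Measure ℝ))
    (fun t : ℝ => ((Real.cosh t : ℝ) : ℂ) ^ (-w)) (fun t : ℝ => ((Real.cosh t : ℝ) : ℂ) ^ (-w)), he] at h2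
  have hI : Integrable (fun p : ℝ × ℝ => (2 : ℂ) ^ (-w) * ((Real.cosh p.1 : ℂ) ^ (-w) * (Real.cosh p.2 : ℂ) ^ (-w))) := by
    exact (hi.mul_prod hi).const_mul _
  constructor
  · have := h1.2 hI
    rwa [integrable_smul_measure (by simp) (by simp)] at this
  · rw [← Measure.volume_eq_prod] at h2
    rw [ENNReal.toReal_ofReal (by norm_num), Complex.real_smul] at h2
    push_cast at h2 ⊢
    linear_combination 2 * h2

lemma aux_K (y : ℝ) : (((besselK0 y : ℝ) : ℂ)) ^ 2 =
    (1 / 4) * ∫ p : ℝ × ℝ, Complex.exp (-(((Real.cosh p.1 + Real.cosh p.2 : ℝ) : ℂ) * y)) := by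
  have h : ∫ t : ℝ, Real.exp (-y * Real.cosh t) = 2 * besselK0 y := by
    have := integral_comp_abs (f := fun t => Real.exp (-y * Real.cosh t))
    simp only [Real.cosh_abs] at this
    exact this
  have h2 := integral_prod_mul (μ := (volume : Measure ℝ)) (ν := (volume : Measure ℝ))
    (fun t => Real.exp (-y * Real.cosh t)) (fun t => Real.exp (-y * Real.cosh t))
  rw [h, ← Measure.volume_eq_prod] at h2
  have h3 : ∫ p : ℝ × ℝ, Complex.exp (-(((Real.cosh p.1 + Real.cosh p.2 : ℝ) : ℂ) * y)) =
     ((∫ p : ℝ × ℝ, Real.exp (-y * Real.cosh p.1) * Real.exp (-y * Real.cosh p.2) : ℝ) : ℂ) := by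
    rw [← integral_complex_ofReal]
    congr 1
    ext p
    rw [← Real.exp_add]
    push_cast
    congr 1
    ring
  rw [h3, h2]
  push_cast
  ring

lemma aux_F (w : ℂ) (hw : 0 < w.re) :
    Integrable (fun q : ℝ × (ℝ × ℝ) => (q.1 : ℂ) ^ (w - 1) *
      Complex.exp (-(((Real.cosh q.2.1 + Real.cosh q.2.2 : ℝ) : ℂ) * q.1)))
      ((volume.restrict (Set.Ioi (0 : ℝ))).prod volume) := by
  have hc : ∀ p : ℝ × ℝ, 0 < Real.cosh p.1 + Real.cosh p.2 := fun p => by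
    have := Real.cosh_pos p.1
    have := Real.cosh_pos p.2
    positivity
  rw [integrable_prod_iff']
  · constructor
    · refine Filter.Eventually.of_forall fun p => ?_
      by_contra hcon
      have h0 := integral_undef hcon
      have h1 := Complex.integral_cpow_mul_exp_neg_mul_Ioi hw (hc p)
      simp only [] at h0
      rw [h1] at h0
      have h3 := hc p
      rcases mul_eq_zero.1 h0 with h | h
      · rw [Complex.cpow_eq_zero_iff] at h
        have h4 := h.1
        rw [one_div, inv_eq_zero] at h4
        exact h3.ne' (by exact_mod_cast h4)
      · exact Complex.Gamma_ne_zero_of_re_pos hw h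
    · have := (aux_B w hw).1.norm.mul_const (Real.Gamma w.re)
      refine this.congr (Filter.Eventually.of_forall fun p => ?_)
      simp only []
      rw [Complex.norm_cpow_eq_rpow_re_of_pos (hc p), Complex.neg_re, Real.rpow_neg (hc p).le,
        ← Real.inv_rpow (hc p).le, ← one_div,
        ← Real.integral_rpow_mul_exp_neg_mul_Ioi hw (hc p)]
      refine setIntegral_congr_fun measurableSet_Ioi fun y hy => ?_
      rw [norm_mul, Complex.norm_cpow_eq_rpow_re_of_pos hy, Complex.norm_exp]
      norm_cast
  · apply Measurable.aestronglyMeasurable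
    fun_prop

lemma aux_C (w : ℂ) (hw : 0 < w.re) :
    IntegrableOn (fun y : ℝ => ((besselK0 y : ℝ) : ℂ) ^ 2 * (y : ℂ) ^ (w - 1)) (Set.Ioi 0) ∧
    ∫ y in Set.Ioi (0 : ℝ), ((besselK0 y : ℝ) : ℂ) ^ 2 * (y : ℂ) ^ (w - 1)
      = 2 ^ (w - 3) * Complex.Gamma (w / 2) ^ 4 / Complex.Gamma w := by
  have hF := aux_F w hw
  have hc : ∀ p : ℝ × ℝ, 0 < Real.cosh p.1 + Real.cosh p.2 := fun p => by
    have := Real.cosh_pos p.1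
    have := Real.cosh_pos p.2
    positivity
  have hK : (fun y : ℝ => ((besselK0 y : ℝ) : ℂ) ^ 2 * (y : ℂ) ^ (w - 1)) = fun y : ℝ =>
      (1 / 4) * ∫ p : ℝ × ℝ, (y : ℂ) ^ (w - 1) *
        Complex.exp (-(((Real.cosh p.1 + Real.cosh p.2 : ℝ) : ℂ) * y)) := by
    ext y
    rw [aux_K, integral_const_mul]
    ring
  rw [hK]
  refine ⟨hF.integral_prod_left.const_mul _, ?_⟩
  rw [integral_const_mul, integral_integral_swap hF]
  have h1 : ∀ p : ℝ × ℝ, ∫ y in Set.Ioi (0 : ℝ), (y : ℂ) ^ (w - 1) *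
        Complex.exp (-(((Real.cosh p.1 + Real.cosh p.2 : ℝ) : ℂ) * y)) =
        ((Real.cosh p.1 + Real.cosh p.2 : ℝ) : ℂ) ^ (-w) * Complex.Gamma w := by
    intro p
    rw [Complex.integral_cpow_mul_exp_neg_mul_Ioi hw (hc p), one_div, Complex.inv_cpow, Complex.cpow_neg]
    rw [Complex.arg_ofReal_of_nonneg (hc p).le]
    exact Real.pi_pos.ne
  simp only [h1]
  rw [integral_mul_const, (aux_B w hw).2]
  have hG := Complex.Gamma_ne_zero_of_re_pos hw
  have e1 : (2 : ℂ) ^ (-w) = (2 ^ w)⁻¹ := Complex.cpow_neg _ _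
  have e2 : (2 : ℂ) ^ (w - 1) = 2 ^ w / 2 := by rw [Complex.cpow_sub _ _ two_ne_zero]; simp
  have e3 : (2 : ℂ) ^ (w - 3) = 2 ^ w / 8 := by
    rw [Complex.cpow_sub _ _ two_ne_zero]; norm_num
  have h2 : (2 : ℂ) ^ w ≠ 0 := by simp [Complex.cpow_eq_zero_iff]
  rw [e1, e2, e3]
  field_simp
  norm_num
  ring

lemma aux_meas : Measurable besselK0 := by
  apply StronglyMeasurable.measurable
  unfold besselK0
  apply StronglyMeasurable.integral_prod_right (f := fun y t : ℝ => Real.exp (-y * Real.cosh t))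
  apply Continuous.stronglyMeasurable
  unfold Function.uncurry
  fun_prop

noncomputable def auxH (s : ℂ) (p : ℝ × ℝ) : ℂ :=
  {p : ℝ × ℝ | p.1 < p.2}.indicator
    (fun p => ((besselK0 p.2 : ℝ) : ℂ) ^ 2 * (p.1 : ℂ) ^ (s - 1)) p

lemma auxH_left (s : ℂ) (x y : ℝ) : auxH s (x, y) = (Set.Iio y).indicator
    (fun x : ℝ => ((besselK0 y : ℝ) : ℂ) ^ 2 * (x : ℂ) ^ (s - 1)) x := rfl

lemma auxH_right (s : ℂ) (x y : ℝ) : auxH s (x, y) = (Set.Ioi x).indicator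
    (fun y : ℝ => ((besselK0 y : ℝ) : ℂ) ^ 2 * (x : ℂ) ^ (s - 1)) y := rfl

lemma aux_cpow_int (s : ℂ) (hs : 0 < s.re) (y : ℝ) (hy : 0 < y) :
    ∫ x in Set.Ioo (0 : ℝ) y, (x : ℂ) ^ (s - 1) = (y : ℂ) ^ s / s := by
  have hs0 : s ≠ 0 := fun h => by simp [h] at hs
  rw [← integral_Ioc_eq_integral_Ioo, ← intervalIntegral.integral_of_le hy.le,
    integral_cpow (Or.inl (by simpa using hs))]
  simp [hs0]

lemma aux_rpow_int (s : ℝ) (hs : 0 < s) (y : ℝ) (hy : 0 < y) :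
    ∫ x in Set.Ioo (0 : ℝ) y, x ^ (s - 1) = y ^ s / s := by
  rw [← integral_Ioc_eq_integral_Ioo, ← intervalIntegral.integral_of_le hy.le,
    integral_rpow (Or.inl (by linarith))]
  simp [hs.ne']

lemma auxH_int (s : ℂ) (hs : 0 < s.re) : Integrable (auxH s)
    ((volume.restrict (Set.Ioi (0 : ℝ))).prod (volume.restrict (Set.Ioi (0 : ℝ)))) := by
  have hw : 0 < (s + 1).re := by simp; linarith
  have hC := (aux_C (s + 1) hw).1
  rw [integrable_prod_iff']
  · constructor
    · refine (ae_restrict_iff' measurableSet_Ioi).2 (Filter.Eventually.of_forall fun y hy => ?_)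
      simp only [auxH_left]
      rw [integrable_indicator_iff measurableSet_Iio, IntegrableOn,
        Measure.restrict_restrict measurableSet_Iio, Set.Iio_inter_Ioi, ← IntegrableOn,
        ← intervalIntegrable_iff_integrableOn_Ioo_of_le (le_of_lt hy)]
      exact (intervalIntegral.intervalIntegrable_cpow' (by simpa using hs)).const_mul _
    · refine (hC.norm.mul_const (s.re)⁻¹).congr ?_
      refine (ae_restrict_iff' measurableSet_Ioi).2 (Filter.Eventually.of_forall fun y hy => ?_)
      simp only [auxH_left, norm_indicator_eq_indicator_norm]
      rw [setIntegral_indicator measurableSet_Iio, Set.Ioi_inter_Iio, norm_mul,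
        add_sub_cancel_right, Complex.norm_cpow_eq_rpow_re_of_pos hy, mul_assoc, ← div_eq_mul_inv,
        ← aux_rpow_int s.re hs y hy, ← integral_const_mul]
      refine setIntegral_congr_fun measurableSet_Ioo fun x hx => ?_
      rw [norm_mul, Complex.norm_cpow_eq_rpow_re_of_pos hx.1]
      simp
  · apply Measurable.aestronglyMeasurable
    have := aux_meas
    unfold auxH
    apply Measurable.indicator
    · fun_prop
    · exact measurableSet_lt measurable_fst measurable_snd

/-- The Mellin transform of `g`: for `Re(s) > 0`, `∫₀^∞ g(x) x^{s−1} dx` converges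
absolutely and equals `2^{s−2} Γ((1+s)/2)⁴ / (s Γ(1+s))`. -/
theorem gK0_mellin (s : ℂ) (hs : 0 < s.re) :
    IntegrableOn (fun x : ℝ => (gK0 x : ℂ) * (x : ℂ) ^ (s - 1)) (Set.Ioi 0) ∧
    (∫ x in Set.Ioi (0 : ℝ), (gK0 x : ℂ) * (x : ℂ) ^ (s - 1))
      = 2 ^ (s - 2) * Complex.Gamma ((1 + s) / 2) ^ 4 / (s * Complex.Gamma (1 + s)) := by
  have hH := auxH_int s hs
  have hw : 0 < (s + 1).re := by simp; linarith
  have hC := (aux_C (s + 1) hw).2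
  have hx : ∀ x ∈ Set.Ioi (0 : ℝ), ∫ y in Set.Ioi (0 : ℝ), auxH s (x, y) =
      (gK0 x : ℂ) * (x : ℂ) ^ (s - 1) := by
    intro x hx
    simp only [auxH_right]
    rw [setIntegral_indicator measurableSet_Ioi, Set.Ioi_inter_Ioi, sup_of_le_right (le_of_lt hx),
      integral_mul_const, gK0, ← integral_complex_ofReal]
    simp
  have hy : ∀ y ∈ Set.Ioi (0 : ℝ), ∫ x in Set.Ioi (0 : ℝ), auxH s (x, y) =
      ((besselK0 y : ℝ) : ℂ) ^ 2 * (y : ℂ) ^ (s + 1 - 1) * s⁻¹ := by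
    intro y hy
    simp only [auxH_left]
    rw [setIntegral_indicator measurableSet_Iio, Set.Ioi_inter_Iio, integral_const_mul,
      aux_cpow_int s hs y hy, add_sub_cancel_right]
    ring
  constructor
  · exact IntegrableOn.congr_fun hH.integral_prod_left hx measurableSet_Ioi
  · rw [← setIntegral_congr_fun measurableSet_Ioi hx, integral_integral_swap (f := fun x y => auxH s (x, y)) hH,
      setIntegral_congr_fun measurableSet_Ioi hy, integral_mul_const, hC,
      show s + 1 - 3 = s - 2 by ring, add_comm s 1]
    rw [mul_comm s, ← div_div, div_eq_mul_inv _ s]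
end

section
/- Let h(s) be the holomorphic extension to a neighborhood of 0 of s ↦ ζ(1+s) − 1/s, where ζ is the Riemann zeta function, and set γ₀ = h(0), γ₁ = h′(0). Let f be holomorphic on a neighborhood of 0. Then there exist a neighborhood U of 0 and a holomorphic function r on U such that for all s ∈ U with s ≠ 0: ζ(1+s)²·f(s)/s = f(0)/s³ + (2γ₀·f(0) + f′(0))/s² + ((γ₀² + 2γ₁)·f(0) + 2γ₀·f′(0) + f″(0)/2)/s + r(s). In particular, the residue at s = 0 of ζ(1+s)²·f(s)/s equals (γ₀² + 2γ₁)·f(0) + 2γ₀·f′(0) + f″(0)/2. -/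
open Complex Filter

lemma aux_slope (g : ℂ → ℂ) (hg : AnalyticAt ℂ g 0) :
    ∃ k : ℂ → ℂ, AnalyticAt ℂ k 0 ∧ k 0 = deriv g 0 ∧ ∀ z, g z = g 0 + z * k z := by
  refine ⟨dslope g 0, ?_, dslope_same g 0, fun z => ?_⟩
  · obtain ⟨p, hp⟩ := hg
    exact ⟨_, hp.has_fpower_series_dslope_fslope⟩
  · have := sub_smul_dslope g 0 z
    simp only [sub_zero, smul_eq_mul] at this
    rw [this]; ring

lemma aux_second (g k : ℂ → ℂ) (hk : AnalyticAt ℂ k 0) (hgk : ∀ z, g z = g 0 + z * k z) :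
    iteratedDeriv 2 g 0 = 2 * deriv k 0 := by
  have h1 : deriv g =ᶠ[nhds 0] fun z => k z + z * deriv k z := by
    filter_upwards [hk.eventually_analyticAt] with z hz
    have h2 : HasDerivAt (fun z => g 0 + z * k z) (1 * k z + z * deriv k z) z :=
      ((hasDerivAt_id z).mul hz.differentiableAt.hasDerivAt).const_add (g 0)
    have h3 : g = fun z => g 0 + z * k z := funext hgk
    rw [h3]
    simpa using h2.deriv
  rw [iteratedDeriv_succ, iteratedDeriv_one, h1.deriv_eq]
  have h2 : HasDerivAt (fun z => k z + z * deriv k z)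
      (deriv k 0 + (1 * deriv k 0 + 0 * deriv (deriv k) 0)) 0 :=
    hk.differentiableAt.hasDerivAt.add
      ((hasDerivAt_id (0:ℂ)).mul hk.deriv.differentiableAt.hasDerivAt)
  rw [h2.deriv]; ring

/-- Laurent expansion at the triple pole `s = 0` of `ζ(1+s)² f(s)/s`: if `h` is the
holomorphic extension near `0` of `s ↦ ζ(1+s) − 1/s`, with `γ₀ = h(0)`, `γ₁ = h′(0)`,
and `f` is holomorphic near `0`, then on a punctured neighborhood of `0`,
`ζ(1+s)² f(s)/s = f(0)/s³ + (2γ₀ f(0) + f′(0))/s²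
  + ((γ₀² + 2γ₁) f(0) + 2γ₀ f′(0) + f″(0)/2)/s + r(s)`
for some function `r` holomorphic near `0`; in particular the residue of
`ζ(1+s)² f(s)/s` at `s = 0` is `(γ₀² + 2γ₁) f(0) + 2γ₀ f′(0) + f″(0)/2`. -/
theorem zeta_triple_pole_laurent (h : ℂ → ℂ) (hh : AnalyticAt ℂ h 0)
    (hzeta : ∀ᶠ s in nhdsWithin (0 : ℂ) {0}ᶜ, h s = riemannZeta (1 + s) - 1 / s)
    (f : ℂ → ℂ) (hf : AnalyticAt ℂ f 0) :
    ∃ U ∈ nhds (0 : ℂ), ∃ r : ℂ → ℂ, (∀ s ∈ U, AnalyticAt ℂ r s) ∧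
      ∀ s ∈ U, s ≠ 0 →
        riemannZeta (1 + s) ^ 2 * f s / s
          = f 0 / s ^ 3 + (2 * h 0 * f 0 + deriv f 0) / s ^ 2 +
            ((h 0 ^ 2 + 2 * deriv h 0) * f 0 + 2 * h 0 * deriv f 0 +
              iteratedDeriv 2 f 0 / 2) / s + r s := by
  obtain ⟨f1, hf1, e1, F1⟩ := aux_slope f hf
  obtain ⟨f2, hf2, e2, F2⟩ := aux_slope f1 hf1
  obtain ⟨f3, hf3, e3, F3⟩ := aux_slope f2 hf2
  obtain ⟨h1, hh1, d1, H1⟩ := aux_slope h hh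
  obtain ⟨h2, hh2, d2, H2⟩ := aux_slope h1 hh1
  have hD : iteratedDeriv 2 f 0 / 2 = f2 0 := by
    rw [aux_second f f1 hf1 F1, e2]; ring
  let r : ℂ → ℂ := fun s => f3 s
    + 2 * (h 0 * f2 s + h1 0 * f1 0 + h2 s * f 0 + s * (h1 0 * f2 s + h2 s * f1 0)
      + s ^ 2 * (h2 s * f2 s))
    + (h 0 ^ 2 * f1 s + 2 * h 0 * h1 s * f s + s * (h1 s ^ 2 * f s))
  have hr : AnalyticAt ℂ r 0 := by
    fun_prop
  rw [eventually_nhdsWithin_iff] at hzeta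
  refine ⟨_, hr.eventually_analyticAt.and hzeta, r, fun s hs => hs.1, fun s hs hs0 => ?_⟩
  have hz : riemannZeta (1 + s) = h s + 1 / s := by
    rw [hs.2 hs0]; ring
  rw [hz, hD, ← e1, ← d1]
  simp only [r]
  have A1 := F1 s
  have A2 := F2 s
  have A3 := F3 s
  have B1 := H1 s
  have B2 := H2 s
  rw [A1, A2, A3, B1, B2]
  field_simp
  ring
end
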